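/- Let K be a commutative semiring with 0 ≠ 1 and Δ a finite alphabet. A nested word series S : NW(Δ) → K is regular if and only if S is sRMSO(K)-definable, if and only if S is sREMSO(K)-definable. -/

import Mathlib

/-! ### Nested words and weighted nested word automata -/

/-- A nesting relation of width `n` (positions `1,…,n`). -/
def IsNestingRel (n : ℕ) (ν : ℕ → ℕ → Prop) : Prop :=
  (∀ i j, ν i j → 1 ≤ i ∧ i < j ∧ j ≤ n) ∧
  (∀ i j j', ν i j → ν i j' → j = j') ∧
  (∀ i i' j, ν i j → ν i' j → i = i') ∧
  (∀ i j i' j', ν i j → ν i' j' → i < i' → j < i' ∨ j' < j)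

/-- A nested word over `Δ`: a nonempty word together with a nesting relation. -/
structure NestedWord (Δ : Type) : Type where
  word : List Δ
  ne : word ≠ []
  rel : ℕ → ℕ → Prop
  isNest : IsNestingRel word.length rel

namespace NestedWord

variable {Δ : Type} (nw : NestedWord Δ)

/-- The length of the nested word. -/
def len : ℕ := nw.word.length

/-- The letter at (1-based) position `j`. -/
def letter (j : ℕ) : Δ := nw.word.getD (j - 1) (nw.word.head nw.ne)

def IsCall (j : ℕ) : Prop := ∃ i, nw.rel j i
def IsReturn (j : ℕ) : Prop := ∃ i, nw.rel i j
def IsInternal (j : ℕ) : Prop :=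
  1 ≤ j ∧ j ≤ nw.len ∧ ¬ nw.IsCall j ∧ ¬ nw.IsReturn j

/-- The nesting depth of position `k`: the number of arches open at `k`. -/
noncomputable def depth (k : ℕ) : ℕ :=
  Set.ncard {p : ℕ × ℕ | nw.rel p.1 p.2 ∧ p.1 ≤ k ∧ k ≤ p.2}

end NestedWord

/-- Clamp a function on `Fin (n+1)` to a function on `ℕ`. -/
def clampFun {Q : Type} {n : ℕ} (r : Fin (n + 1) → Q) : ℕ → Q :=
  fun k => r ⟨min k n, Nat.lt_succ_of_le (min_le_right _ _)⟩

/-- A weighted nested word automaton over the commutative semiring `K`. -/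
structure WNWA (K Δ : Type) [CommSemiring K] : Type 1 where
  Q : Type
  [fintQ : Fintype Q]
  ι : Q → K
  δcall : Q → Δ → Q → K
  δint : Q → Δ → Q → K
  δret : Q → Q → Δ → Q → K
  κ : Q → K

attribute [instance] WNWA.fintQ

namespace WNWA

variable {K Δ : Type} [CommSemiring K]

open Classical in
/-- The weight contributed by position `j` in a run `ρ`. -/
noncomputable def posWeight (A : WNWA K Δ) (nw : NestedWord Δ) (ρ : ℕ → A.Q) (j : ℕ) : K :=
  if nw.IsCall j then A.δcall (ρ (j - 1)) (nw.letter j) (ρ j)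
  else if h : nw.IsReturn j then
    A.δret (ρ (j - 1)) (ρ (h.choose - 1)) (nw.letter j) (ρ j)
  else A.δint (ρ (j - 1)) (nw.letter j) (ρ j)

/-- The weight of a run. -/
noncomputable def runWeight (A : WNWA K Δ) (nw : NestedWord Δ) (ρ : ℕ → A.Q) : K :=
  ∏ j ∈ Finset.Icc 1 nw.len, A.posWeight nw ρ j

/-- The behavior of a weighted nested word automaton. -/
noncomputable def behavior (A : WNWA K Δ) (nw : NestedWord Δ) : K :=
  ∑ r : Fin (nw.len + 1) → A.Q,
    A.ι (r 0) * A.runWeight nw (clampFun r) * A.κ (r (Fin.last _))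

end WNWA

/-- A nested word series is regular if it is the behavior of some WNWA. -/
def NWRegular {K Δ : Type} [CommSemiring K] (S : NestedWord Δ → K) : Prop :=
  ∃ A : WNWA K Δ, ∀ nw, A.behavior nw = S nw
/-! ### Weighted MSO logic over nested words -/

/-- Weighted MSO formulae over nested words: constants from `K`, atomic formulae
and their negations, closed under `∨`, `∧`, and the four quantifiers. -/
inductive WMSO (K Δ : Type) : Type where
  | const : K → WMSO K Δ
  | eqv : ℕ → ℕ → WMSO K Δ
  | lab : Δ → ℕ → WMSO K Δ
  | lev : ℕ → ℕ → WMSO K Δ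
  | nuv : ℕ → ℕ → WMSO K Δ
  | mem : ℕ → ℕ → WMSO K Δ
  | neq : ℕ → ℕ → WMSO K Δ
  | nlab : Δ → ℕ → WMSO K Δ
  | nle : ℕ → ℕ → WMSO K Δ
  | nnu : ℕ → ℕ → WMSO K Δ
  | nmem : ℕ → ℕ → WMSO K Δ
  | or : WMSO K Δ → WMSO K Δ → WMSO K Δ
  | and : WMSO K Δ → WMSO K Δ → WMSO K Δ
  | exF : ℕ → WMSO K Δ → WMSO K Δ
  | exS : ℕ → WMSO K Δ → WMSO K Δ
  | alF : ℕ → WMSO K Δ → WMSO K Δ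
  | alS : ℕ → WMSO K Δ → WMSO K Δ

namespace WMSO

variable {K Δ : Type} [CommSemiring K]

open Classical in
/-- Weighted semantics: `∨ ↦ +`, `∧ ↦ ·`, `∃ ↦ Σ`, `∀ ↦ Π`. -/
noncomputable def sem (nw : NestedWord Δ) :
    WMSO K Δ → (ℕ → ℕ) → (ℕ → Finset ℕ) → K
  | .const k, _, _ => k
  | .eqv x y, γ1, _ => if γ1 x = γ1 y then 1 else 0
  | .lab a x, γ1, _ => if nw.letter (γ1 x) = a then 1 else 0
  | .lev x y, γ1, _ => if γ1 x ≤ γ1 y then 1 else 0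
  | .nuv x y, γ1, _ => if nw.rel (γ1 x) (γ1 y) then 1 else 0
  | .mem x X, γ1, γ2 => if γ1 x ∈ γ2 X then 1 else 0
  | .neq x y, γ1, _ => if γ1 x = γ1 y then 0 else 1
  | .nlab a x, γ1, _ => if nw.letter (γ1 x) = a then 0 else 1
  | .nle x y, γ1, _ => if γ1 x ≤ γ1 y then 0 else 1
  | .nnu x y, γ1, _ => if nw.rel (γ1 x) (γ1 y) then 0 else 1
  | .nmem x X, γ1, γ2 => if γ1 x ∈ γ2 X then 0 else 1
  | .or φ ψ, γ1, γ2 => sem nw φ γ1 γ2 + sem nw ψ γ1 γ2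
  | .and φ ψ, γ1, γ2 => sem nw φ γ1 γ2 * sem nw ψ γ1 γ2
  | .exF x φ, γ1, γ2 =>
      ∑ i ∈ Finset.Icc 1 nw.len, sem nw φ (Function.update γ1 x i) γ2
  | .exS X φ, γ1, γ2 =>
      ∑ T ∈ (Finset.Icc 1 nw.len).powerset, sem nw φ γ1 (Function.update γ2 X T)
  | .alF x φ, γ1, γ2 =>
      ∏ i ∈ Finset.Icc 1 nw.len, sem nw φ (Function.update γ1 x i) γ2
  | .alS X φ, γ1, γ2 =>
      ∏ T ∈ (Finset.Icc 1 nw.len).powerset, sem nw φ γ1 (Function.update γ2 X T)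

/-- Free first-order variables. -/
def freeF : WMSO K Δ → Finset ℕ
  | .const _ => ∅
  | .eqv x y => {x, y}
  | .lab _ x => {x}
  | .lev x y => {x, y}
  | .nuv x y => {x, y}
  | .mem x _ => {x}
  | .neq x y => {x, y}
  | .nlab _ x => {x}
  | .nle x y => {x, y}
  | .nnu x y => {x, y}
  | .nmem x _ => {x}
  | .or φ ψ => φ.freeF ∪ ψ.freeF
  | .and φ ψ => φ.freeF ∪ ψ.freeF
  | .exF x φ => φ.freeF.erase x
  | .exS _ φ => φ.freeF
  | .alF x φ => φ.freeF.erase x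
  | .alS _ φ => φ.freeF

/-- Free second-order variables. -/
def freeS : WMSO K Δ → Finset ℕ
  | .mem _ X => {X}
  | .nmem _ X => {X}
  | .or φ ψ => φ.freeS ∪ ψ.freeS
  | .and φ ψ => φ.freeS ∪ ψ.freeS
  | .exF _ φ => φ.freeS
  | .alF _ φ => φ.freeS
  | .exS X φ => φ.freeS.erase X
  | .alS X φ => φ.freeS.erase X
  | _ => ∅

/-- Sentences: no free variables. -/
def Sentence (φ : WMSO K Δ) : Prop := φ.freeF = ∅ ∧ φ.freeS = ∅

end WMSO

/-! ### Classical MSO over nested words and syntactically unambiguous formulae -/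

/-- Classical MSO formulae over nested words. -/
inductive MSOF (Δ : Type) : Type where
  | eqv : ℕ → ℕ → MSOF Δ
  | lab : Δ → ℕ → MSOF Δ
  | lev : ℕ → ℕ → MSOF Δ
  | nuv : ℕ → ℕ → MSOF Δ
  | mem : ℕ → ℕ → MSOF Δ
  | not : MSOF Δ → MSOF Δ
  | or : MSOF Δ → MSOF Δ → MSOF Δ
  | and : MSOF Δ → MSOF Δ → MSOF Δ
  | exF : ℕ → MSOF Δ → MSOF Δ
  | exS : ℕ → MSOF Δ → MSOF Δ
  | alF : ℕ → MSOF Δ → MSOF Δ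
  | alS : ℕ → MSOF Δ → MSOF Δ

namespace MSOF

variable {Δ : Type}

/-- Substitution of first-order variable `x` by `y` (capture cannot occur for fresh `y`). -/
def substF (x y : ℕ) : MSOF Δ → MSOF Δ
  | eqv u v => eqv (if u = x then y else u) (if v = x then y else v)
  | lab a u => lab a (if u = x then y else u)
  | lev u v => lev (if u = x then y else u) (if v = x then y else v)
  | nuv u v => nuv (if u = x then y else u) (if v = x then y else v)
  | mem u X => mem (if u = x then y else u) X
  | not φ => not (substF x y φ)
  | or φ ψ => or (substF x y φ) (substF x y ψ)
  | and φ ψ => and (substF x y φ) (substF x y ψ)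
  | exF z φ => if z = x then exF z φ else exF z (substF x y φ)
  | exS Z φ => exS Z (substF x y φ)
  | alF z φ => if z = x then alF z φ else alF z (substF x y φ)
  | alS Z φ => alS Z (substF x y φ)

/-- Substitution of second-order variable `X` by `Y`. -/
def substS (X Y : ℕ) : MSOF Δ → MSOF Δ
  | mem u Z => mem u (if Z = X then Y else Z)
  | not φ => not (substS X Y φ)
  | or φ ψ => or (substS X Y φ) (substS X Y ψ)
  | and φ ψ => and (substS X Y φ) (substS X Y ψ)
  | exF z φ => exF z (substS X Y φ)
  | exS Z φ => if Z = X then exS Z φ else exS Z (substS X Y φ)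
  | alF z φ => alF z (substS X Y φ)
  | alS Z φ => if Z = X then alS Z φ else alS Z (substS X Y φ)
  | φ => φ

/-- Largest first-order variable occurring (free or bound). -/
def maxF : MSOF Δ → ℕ
  | eqv u v => max u v
  | lab _ u => u
  | lev u v => max u v
  | nuv u v => max u v
  | mem u _ => u
  | not φ => φ.maxF
  | or φ ψ => max φ.maxF ψ.maxF
  | and φ ψ => max φ.maxF ψ.maxF
  | exF z φ => max z φ.maxF
  | exS _ φ => φ.maxF
  | alF z φ => max z φ.maxF
  | alS _ φ => φ.maxF

/-- Largest second-order variable occurring (free or bound). -/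
def maxS : MSOF Δ → ℕ
  | mem _ X => X
  | not φ => φ.maxS
  | or φ ψ => max φ.maxS ψ.maxS
  | and φ ψ => max φ.maxS ψ.maxS
  | exF _ φ => φ.maxS
  | exS Z φ => max Z φ.maxS
  | alF _ φ => φ.maxS
  | alS Z φ => max Z φ.maxS
  | _ => 0

end MSOF

/-- The lexicographic (strict) order `Y < X` on sets, used to disambiguate set
quantification: `∃y. y ∈ X ∧ ¬ y ∈ Y ∧ ∀z. (z < y → (z ∈ Y ↔ z ∈ X))`,
where `y` and `z` are the first-order variables `0` and `1`. -/
def lessSet {Δ : Type} (Y X : ℕ) : MSOF Δ :=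
  .exF 0 (.and (.mem 0 X) (.and (.not (.mem 0 Y))
    (.alF 1 (.or (.lev 0 1)
      (.and (.or (.not (.mem 1 Y)) (.mem 1 X)) (.or (.not (.mem 1 X)) (.mem 1 Y)))))))

mutual
  /-- `PlusOf K ψ φ` : `φ = ψ⁺`, the positive syntactically unambiguous weighted
  version of the classical formula `ψ`. -/
  inductive PlusOf (K : Type) {Δ : Type} : MSOF Δ → WMSO K Δ → Prop where
    | eqv : ∀ x y, PlusOf K (.eqv x y) (.eqv x y)
    | lab : ∀ (a : Δ) x, PlusOf K (.lab a x) (.lab a x)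
    | lev : ∀ x y, PlusOf K (.lev x y) (.lev x y)
    | nuv : ∀ x y, PlusOf K (.nuv x y) (.nuv x y)
    | mem : ∀ x X, PlusOf K (.mem x X) (.mem x X)
    | not : ∀ {ψ : MSOF Δ} {χ}, MinusOf K ψ χ → PlusOf K (.not ψ) χ
    | or : ∀ {ψ₁ ψ₂ : MSOF Δ} {a b c}, PlusOf K ψ₁ a → MinusOf K ψ₁ b → PlusOf K ψ₂ c →
        PlusOf K (.or ψ₁ ψ₂) (.or a (.and b c))
    | and : ∀ {ψ₁ ψ₂ : MSOF Δ} {a b}, PlusOf K ψ₁ a → PlusOf K ψ₂ b →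
        PlusOf K (.and ψ₁ ψ₂) (.and a b)
    | exF : ∀ {x : ℕ} {ψ : MSOF Δ} {a χ} (y : ℕ), y = (MSOF.exF x ψ).maxF + 1 →
        PlusOf K ψ a →
        MinusOf K (.and (.not (.lev x y)) (ψ.substF x y)) χ →
        PlusOf K (.exF x ψ) (.exF x (.and a (.alF y χ)))
    | alF : ∀ {x : ℕ} {ψ : MSOF Δ} {a}, PlusOf K ψ a → PlusOf K (.alF x ψ) (.alF x a)
    | exS : ∀ {X : ℕ} {ψ : MSOF Δ} {a χ} (Y : ℕ), Y = (MSOF.exS X ψ).maxS + 1 →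
        PlusOf K ψ a →
        MinusOf K (.and (lessSet Y X) (ψ.substS X Y)) χ →
        PlusOf K (.exS X ψ) (.exS X (.and a (.alS Y χ)))
    | alS : ∀ {X : ℕ} {ψ : MSOF Δ} {a}, PlusOf K ψ a → PlusOf K (.alS X ψ) (.alS X a)

  /-- `MinusOf K ψ φ` : `φ = ψ⁻`. -/
  inductive MinusOf (K : Type) {Δ : Type} : MSOF Δ → WMSO K Δ → Prop where
    | eqv : ∀ x y, MinusOf K (.eqv x y) (.neq x y)
    | lab : ∀ (a : Δ) x, MinusOf K (.lab a x) (.nlab a x)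
    | lev : ∀ x y, MinusOf K (.lev x y) (.nle x y)
    | nuv : ∀ x y, MinusOf K (.nuv x y) (.nnu x y)
    | mem : ∀ x X, MinusOf K (.mem x X) (.nmem x X)
    | not : ∀ {ψ : MSOF Δ} {χ}, PlusOf K ψ χ → MinusOf K (.not ψ) χ
    | or : ∀ {ψ₁ ψ₂ : MSOF Δ} {a b}, MinusOf K ψ₁ a → MinusOf K ψ₂ b →
        MinusOf K (.or ψ₁ ψ₂) (.and a b)
    | and : ∀ {ψ₁ ψ₂ : MSOF Δ} {a b c}, MinusOf K ψ₁ a → PlusOf K ψ₁ b → MinusOf K ψ₂ c →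
        MinusOf K (.and ψ₁ ψ₂) (.or a (.and b c))
    | exF : ∀ {x : ℕ} {ψ : MSOF Δ} {a}, MinusOf K ψ a → MinusOf K (.exF x ψ) (.alF x a)
    | alF : ∀ {x : ℕ} {ψ : MSOF Δ} {a χ} (y : ℕ), y = (MSOF.alF x ψ).maxF + 1 →
        MinusOf K ψ a →
        MinusOf K (.and (.not (.lev x y)) (.not (ψ.substF x y))) χ →
        MinusOf K (.alF x ψ) (.exF x (.and a (.alF y χ)))
    | exS : ∀ {X : ℕ} {ψ : MSOF Δ} {a}, MinusOf K ψ a → MinusOf K (.exS X ψ) (.alS X a)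
    | alS : ∀ {X : ℕ} {ψ : MSOF Δ} {a χ} (Y : ℕ), Y = (MSOF.alS X ψ).maxS + 1 →
        MinusOf K ψ a →
        MinusOf K (.and (lessSet Y X) (.not (ψ.substS X Y))) χ →
        MinusOf K (.alS X ψ) (.exS X (.and a (.alS Y χ)))
end

/-- A weighted formula is syntactically unambiguous if it is of the form `ψ⁺` or
`ψ⁻` for a classical formula `ψ`. -/
def SyntUnamb {K Δ : Type} (φ : WMSO K Δ) : Prop :=
  ∃ ψ : MSOF Δ, PlusOf K ψ φ ∨ MinusOf K ψ φ

/-- Almost unambiguous formulae: the smallest class containing all constants and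
all syntactically unambiguous formulae which is closed under `∧` and `∨`. -/
inductive AUMSO {K Δ : Type} : WMSO K Δ → Prop where
  | const (k : K) : AUMSO (.const k)
  | unamb {φ : WMSO K Δ} : SyntUnamb φ → AUMSO φ
  | and {φ ψ : WMSO K Δ} : AUMSO φ → AUMSO ψ → AUMSO (.and φ ψ)
  | or {φ ψ : WMSO K Δ} : AUMSO φ → AUMSO ψ → AUMSO (.or φ ψ)

/-- Weakly unambiguous formulae: additionally closed under existential quantification. -/
inductive WUMSO {K Δ : Type} : WMSO K Δ → Prop where
  | const (k : K) : WUMSO (.const k)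
  | unamb {φ : WMSO K Δ} : SyntUnamb φ → WUMSO φ
  | and {φ ψ : WMSO K Δ} : WUMSO φ → WUMSO ψ → WUMSO (.and φ ψ)
  | or {φ ψ : WMSO K Δ} : WUMSO φ → WUMSO ψ → WUMSO (.or φ ψ)
  | exF {x : ℕ} {φ : WMSO K Δ} : WUMSO φ → WUMSO (.exF x φ)
  | exS {X : ℕ} {φ : WMSO K Δ} : WUMSO φ → WUMSO (.exS X φ)

/-- Syntactically restricted MSO: every subformula `∀X.ψ` has `ψ` syntactically
unambiguous and every subformula `∀x.ψ` has `ψ` almost unambiguous. -/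
def SRMSO {K Δ : Type} : WMSO K Δ → Prop
  | .or φ ψ => SRMSO φ ∧ SRMSO ψ
  | .and φ ψ => SRMSO φ ∧ SRMSO ψ
  | .exF _ φ => SRMSO φ
  | .exS _ φ => SRMSO φ
  | .alF _ φ => AUMSO φ ∧ SRMSO φ
  | .alS _ φ => SyntUnamb φ ∧ SRMSO φ
  | _ => True

/-- Syntactically weakly restricted MSO. -/
def SWRMSO {K Δ : Type} : WMSO K Δ → Prop
  | .or φ ψ => SWRMSO φ ∧ SWRMSO ψ
  | .and φ ψ => SWRMSO φ ∧ SWRMSO ψ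
  | .exF _ φ => SWRMSO φ
  | .exS _ φ => SWRMSO φ
  | .alF _ φ => WUMSO φ ∧ SWRMSO φ
  | .alS _ φ => SyntUnamb φ ∧ SWRMSO φ
  | _ => True

/-- Formulae without set quantification. -/
def NoSetQuant {K Δ : Type} : WMSO K Δ → Prop
  | .or φ ψ => NoSetQuant φ ∧ NoSetQuant ψ
  | .and φ ψ => NoSetQuant φ ∧ NoSetQuant ψ
  | .exF _ φ => NoSetQuant φ
  | .alF _ φ => NoSetQuant φ
  | .exS _ _ => False
  | .alS _ _ => False
  | _ => True

/-- First-order fragment of `SRMSO`. -/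
def SRFO {K Δ : Type} (φ : WMSO K Δ) : Prop := SRMSO φ ∧ NoSetQuant φ

/-- `∃X₁.…∃Xₘ.ψ` with `ψ ∈ sRFO(K)`. -/
inductive SREMSO {K Δ : Type} : WMSO K Δ → Prop where
  | base {φ : WMSO K Δ} : SRFO φ → SREMSO φ
  | exS {X : ℕ} {φ : WMSO K Δ} : SREMSO φ → SREMSO (.exS X φ)

/-- A nested word series is `Z`-definable if it is the semantics of a sentence in `Z`. -/
def NWDefinable {K Δ : Type} [CommSemiring K] (Z : WMSO K Δ → Prop)
    (S : NestedWord Δ → K) : Prop :=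
  ∃ φ : WMSO K Δ, Z φ ∧ φ.Sentence ∧ ∀ nw γ1 γ2, φ.sem nw γ1 γ2 = S nw

/-! ### Part 1: classical semantics and unambiguous formulae -/

open Classical in
/-- Indicator of a proposition in a semiring. -/
noncomputable def ind (K : Type) [CommSemiring K] (p : Prop) : K := if p then 1 else 0

theorem ind_true {K : Type} [CommSemiring K] {p : Prop} (h : p) : ind K p = 1 := by
  simp [ind, h]

theorem ind_false {K : Type} [CommSemiring K] {p : Prop} (h : ¬ p) : ind K p = 0 := by
  simp [ind, h]

theorem ind_congr {K : Type} [CommSemiring K] {p q : Prop} (h : p ↔ q) : ind K p = ind K q := by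
  rw [propext h]

theorem ind_ite {K : Type} [CommSemiring K] (p : Prop) {_ : Decidable p} :
    (if p then 1 else 0) = ind K p := by
  by_cases hp : p <;> simp [ind, hp]

theorem ind_ite_not {K : Type} [CommSemiring K] (p : Prop) {_ : Decidable p} :
    (if p then 0 else 1) = ind K (¬ p) := by
  by_cases hp : p <;> simp [ind, hp]

theorem ind_mul {K : Type} [CommSemiring K] (p q : Prop) :
    ind K p * ind K q = ind K (p ∧ q) := by
  by_cases hp : p <;> by_cases hq : q <;> simp [ind, hp, hq]

theorem ind_prod {K ι : Type} [CommSemiring K] (s : Finset ι) (p : ι → Prop) :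
    ∏ i ∈ s, ind K (p i) = ind K (∀ i ∈ s, p i) := by
  classical
  induction s using Finset.induction_on with
  | empty => simp [ind]
  | insert a s ha ih => rw [Finset.prod_insert ha, ih, ind_mul]; apply ind_congr; simp

theorem ind_or {K : Type} [CommSemiring K] (p q : Prop) :
    ind K p + ind K (¬ p ∧ q) = ind K (p ∨ q) := by
  by_cases hp : p <;> by_cases hq : q <;> simp [ind, hp, hq]

theorem ind_min {K ι L : Type} [CommSemiring K] [LinearOrder L] (s : Finset ι) (f : ι → L)
    (hf : Set.InjOn f s) (p : ι → Prop) :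
    ∑ i ∈ s, ind K (p i) * ∏ j ∈ s, ind K (¬ (f j < f i ∧ p j)) = ind K (∃ i ∈ s, p i) := by
  classical
  simp only [ind_prod, ind_mul]
  by_cases h : ∃ i ∈ s, p i
  · obtain ⟨i0, hi0, hp0⟩ := h
    obtain ⟨m, hm, hmin⟩ := Finset.exists_min_image (s.filter p) f ⟨i0, by simp [hi0, hp0]⟩
    simp only [Finset.mem_filter] at hm hmin
    rw [Finset.sum_eq_single m]
    · rw [ind_true, ind_true ⟨i0, hi0, hp0⟩]
      refine ⟨hm.2, fun j hj h => ?_⟩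
      exact absurd h.1 (not_lt.mpr (hmin j ⟨hj, h.2⟩))
    · intro b hb hbm
      apply ind_false
      rintro ⟨hpb, hall⟩
      have h1 := hmin b ⟨hb, hpb⟩
      rcases h1.lt_or_eq with h2 | h2
      · exact hall m hm.1 ⟨h2, hm.2⟩
      · exact hbm (hf hb hm.1 h2.symm)
    · intro h; exact absurd hm.1 h
  · rw [ind_false h]
    apply Finset.sum_eq_zero
    intro i hi
    apply ind_false
    rintro ⟨h1, -⟩
    exact h ⟨i, hi, h1⟩

namespace MSOF
variable {Δ : Type}

/-- Classical semantics. -/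
def holds (nw : NestedWord Δ) : MSOF Δ → (ℕ → ℕ) → (ℕ → Finset ℕ) → Prop
  | eqv x y, g, _ => g x = g y
  | lab a x, g, _ => nw.letter (g x) = a
  | lev x y, g, _ => g x ≤ g y
  | nuv x y, g, _ => nw.rel (g x) (g y)
  | mem x X, g, G => g x ∈ G X
  | not φ, g, G => ¬ holds nw φ g G
  | or φ ψ, g, G => holds nw φ g G ∨ holds nw ψ g G
  | and φ ψ, g, G => holds nw φ g G ∧ holds nw ψ g G
  | exF x φ, g, G => ∃ i ∈ Finset.Icc 1 nw.len, holds nw φ (Function.update g x i) G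
  | exS X φ, g, G => ∃ T ∈ (Finset.Icc 1 nw.len).powerset, holds nw φ g (Function.update G X T)
  | alF x φ, g, G => ∀ i ∈ Finset.Icc 1 nw.len, holds nw φ (Function.update g x i) G
  | alS X φ, g, G => ∀ T ∈ (Finset.Icc 1 nw.len).powerset, holds nw φ g (Function.update G X T)

theorem upd_agree {α : Type} {g g' : ℕ → α} {x : ℕ} {i : α} {m : ℕ}
    (h : ∀ y, y ≤ m → g y = g' y) :
    ∀ y, y ≤ m → Function.update g x i y = Function.update g' x i y := by
  intro y hy
  by_cases hyx : y = x
  · subst hyx; simp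
  · simp [hyx, h y hy]

theorem holds_congr (nw : NestedWord Δ) (ψ : MSOF Δ) : ∀ (g g' : ℕ → ℕ) (G G' : ℕ → Finset ℕ),
    (∀ x, x ≤ ψ.maxF → g x = g' x) → (∀ X, X ≤ ψ.maxS → G X = G' X) →
    (ψ.holds nw g G ↔ ψ.holds nw g' G') := by
  induction ψ with
  | eqv x y => intro g g' G G' h1 h2; simp only [holds]; rw [h1 x (by simp [maxF]), h1 y (by simp [maxF])]
  | lab a x => intro g g' G G' h1 h2; simp only [holds]; rw [h1 x (by simp [maxF])]
  | lev x y => intro g g' G G' h1 h2; simp only [holds]; rw [h1 x (by simp [maxF]), h1 y (by simp [maxF])]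
  | nuv x y => intro g g' G G' h1 h2; simp only [holds]; rw [h1 x (by simp [maxF]), h1 y (by simp [maxF])]
  | mem x X => intro g g' G G' h1 h2; simp only [holds]; rw [h1 x (by simp [maxF]), h2 X (by simp [maxS])]
  | not φ ih => intro g g' G G' h1 h2; simp only [holds]; rw [ih g g' G G' h1 h2]
  | or φ ψ ih1 ih2 =>
    intro g g' G G' h1 h2; simp only [holds]
    simp only [maxF, maxS, le_max_iff] at h1 h2
    rw [ih1 g g' G G' (fun x hx => h1 x (Or.inl hx)) (fun x hx => h2 x (Or.inl hx)),
      ih2 g g' G G' (fun x hx => h1 x (Or.inr hx)) (fun x hx => h2 x (Or.inr hx))]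
  | and φ ψ ih1 ih2 =>
    intro g g' G G' h1 h2; simp only [holds]
    simp only [maxF, maxS, le_max_iff] at h1 h2
    rw [ih1 g g' G G' (fun x hx => h1 x (Or.inl hx)) (fun x hx => h2 x (Or.inl hx)),
      ih2 g g' G G' (fun x hx => h1 x (Or.inr hx)) (fun x hx => h2 x (Or.inr hx))]
  | exF z φ ih =>
    intro g g' G G' h1 h2
    simp only [holds]; simp only [maxF, maxS, le_max_iff] at h1 h2
    refine exists_congr fun i => and_congr_right fun _ => ?_
    exact ih _ _ _ _ (upd_agree fun x hx => h1 x (Or.inr hx)) h2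
  | alF z φ ih =>
    intro g g' G G' h1 h2
    simp only [holds]; simp only [maxF, maxS, le_max_iff] at h1 h2
    refine forall_congr' fun i => forall_congr' fun _ => ?_
    exact ih _ _ _ _ (upd_agree fun x hx => h1 x (Or.inr hx)) h2
  | exS z φ ih =>
    intro g g' G G' h1 h2
    simp only [holds]; simp only [maxF, maxS, le_max_iff] at h1 h2
    refine exists_congr fun i => and_congr_right fun _ => ?_
    exact ih _ _ _ _ h1 (upd_agree fun x hx => h2 x (Or.inr hx))
  | alS z φ ih =>
    intro g g' G G' h1 h2
    simp only [holds]; simp only [maxF, maxS, le_max_iff] at h1 h2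
    refine forall_congr' fun i => forall_congr' fun _ => ?_
    exact ih _ _ _ _ h1 (upd_agree fun x hx => h2 x (Or.inr hx))

theorem upd_ite {α : Type} (g : ℕ → α) (x y u : ℕ) :
    g (if u = x then y else u) = Function.update g x (g y) u := by
  by_cases h : u = x
  · simp [h]
  · simp [h]

theorem upd_swap {α : Type} (g : ℕ → α) (x y z : ℕ) (i : α) (hz : z ≠ x) (hy : y ≠ z) :
    Function.update (Function.update g z i) x (Function.update g z i y)
      = Function.update (Function.update g x (g y)) z i := by
  rw [Function.update_of_ne hy, Function.update_comm hz]

theorem holds_substF (nw : NestedWord Δ) (x y : ℕ) (ψ : MSOF Δ) : ∀ (g : ℕ → ℕ) (G : ℕ → Finset ℕ),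
    ψ.maxF < y →
    ((ψ.substF x y).holds nw g G ↔ ψ.holds nw (Function.update g x (g y)) G) := by
  induction ψ with
  | eqv u v => intro g G _; simp only [substF, holds, upd_ite g]
  | lab a u => intro g G _; simp only [substF, holds, upd_ite g]
  | lev u v => intro g G _; simp only [substF, holds, upd_ite g]
  | nuv u v => intro g G _; simp only [substF, holds, upd_ite g]
  | mem u X => intro g G _; simp only [substF, holds, upd_ite g]
  | not φ ih => intro g G h; simp only [substF, holds]; rw [ih g G h]
  | or φ ψ ih1 ih2 =>
    intro g G h; simp only [maxF, max_lt_iff] at h; simp only [substF, holds]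
    rw [ih1 g G h.1, ih2 g G h.2]
  | and φ ψ ih1 ih2 =>
    intro g G h; simp only [maxF, max_lt_iff] at h; simp only [substF, holds]
    rw [ih1 g G h.1, ih2 g G h.2]
  | exF z φ ih =>
    intro g G h; simp only [maxF, max_lt_iff] at h; simp only [substF]
    split_ifs with hz
    · subst hz; simp only [holds, Function.update_idem]
    · simp only [holds]
      refine exists_congr fun i => and_congr_right fun _ => ?_
      rw [ih _ _ h.2, upd_swap _ _ _ _ _ hz (by omega)]
  | alF z φ ih =>
    intro g G h; simp only [maxF, max_lt_iff] at h; simp only [substF]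
    split_ifs with hz
    · subst hz; simp only [holds, Function.update_idem]
    · simp only [holds]
      refine forall_congr' fun i => forall_congr' fun _ => ?_
      rw [ih _ _ h.2, upd_swap _ _ _ _ _ hz (by omega)]
  | exS z φ ih =>
    intro g G h; simp only [substF, holds]
    refine exists_congr fun i => and_congr_right fun _ => ?_
    exact ih _ _ h
  | alS z φ ih =>
    intro g G h; simp only [substF, holds]
    refine forall_congr' fun i => forall_congr' fun _ => ?_
    exact ih _ _ h

theorem holds_substS (nw : NestedWord Δ) (x y : ℕ) (ψ : MSOF Δ) : ∀ (g : ℕ → ℕ) (G : ℕ → Finset ℕ),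
    ψ.maxS < y →
    ((ψ.substS x y).holds nw g G ↔ ψ.holds nw g (Function.update G x (G y))) := by
  induction ψ with
  | eqv u v => intro g G _; simp only [substS, holds]
  | lab a u => intro g G _; simp only [substS, holds]
  | lev u v => intro g G _; simp only [substS, holds]
  | nuv u v => intro g G _; simp only [substS, holds]
  | mem u X => intro g G _; simp only [substS, holds, upd_ite G]
  | not φ ih => intro g G h; simp only [substS, holds]; rw [ih g G h]
  | or φ ψ ih1 ih2 =>
    intro g G h; simp only [maxS, max_lt_iff] at h; simp only [substS, holds]
    rw [ih1 g G h.1, ih2 g G h.2]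
  | and φ ψ ih1 ih2 =>
    intro g G h; simp only [maxS, max_lt_iff] at h; simp only [substS, holds]
    rw [ih1 g G h.1, ih2 g G h.2]
  | exS z φ ih =>
    intro g G h; simp only [maxS, max_lt_iff] at h; simp only [substS]
    split_ifs with hz
    · subst hz; simp only [holds, Function.update_idem]
    · simp only [holds]
      refine exists_congr fun i => and_congr_right fun _ => ?_
      rw [ih _ _ h.2, upd_swap _ _ _ _ _ hz (by omega)]
  | alS z φ ih =>
    intro g G h; simp only [maxS, max_lt_iff] at h; simp only [substS]
    split_ifs with hz
    · subst hz; simp only [holds, Function.update_idem]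
    · simp only [holds]
      refine forall_congr' fun i => forall_congr' fun _ => ?_
      rw [ih _ _ h.2, upd_swap _ _ _ _ _ hz (by omega)]
  | exF z φ ih =>
    intro g G h; simp only [substS, holds]
    refine exists_congr fun i => and_congr_right fun _ => ?_
    exact ih _ _ h
  | alF z φ ih =>
    intro g G h; simp only [substS, holds]
    refine forall_congr' fun i => forall_congr' fun _ => ?_
    exact ih _ _ h

/-- after quantifying `x := i`, `y := j` (`y` fresh) the substituted formula speaks about `j`. -/
theorem holds_substF_fresh (nw : NestedWord Δ) (x y : ℕ) (ψ : MSOF Δ) (g : ℕ → ℕ)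
    (G : ℕ → Finset ℕ) (h : ψ.maxF < y) (i j : ℕ) :
    (ψ.substF x y).holds nw (Function.update (Function.update g x i) y j) G ↔
      ψ.holds nw (Function.update g x j) G := by
  rw [holds_substF _ _ _ _ _ _ h]
  apply holds_congr _ _ _ _ _ _ _ (fun _ _ => rfl)
  intro z hz
  have : z ≠ y := by omega
  by_cases hx : z = x <;> simp [hx, this]

theorem holds_substS_fresh (nw : NestedWord Δ) (x y : ℕ) (ψ : MSOF Δ) (g : ℕ → ℕ)
    (G : ℕ → Finset ℕ) (h : ψ.maxS < y) (i j : Finset ℕ) :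
    (ψ.substS x y).holds nw g (Function.update (Function.update G x i) y j) ↔
      ψ.holds nw g (Function.update G x j) := by
  rw [holds_substS _ _ _ _ _ _ h]
  apply holds_congr _ _ _ _ _ _ (fun _ _ => rfl)
  intro z hz
  have : z ≠ y := by omega
  by_cases hx : z = x <;> simp [hx, this]

open Classical in
/-- Characteristic function in the lexicographic order. -/
noncomputable def lexSet (T : Finset ℕ) : Lex (ℕ → Bool) := toLex fun i => decide (i ∈ T)

theorem lexSet_inj : Function.Injective lexSet := by
  intro S T h
  ext i
  have := congrFun (congrArg ofLex h) i
  simpa [lexSet] using this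

theorem holds_lessSet (nw : NestedWord Δ) (Y X : ℕ) (g : ℕ → ℕ) (G : ℕ → Finset ℕ)
    (hY : G Y ⊆ Finset.Icc 1 nw.len) (hX : G X ⊆ Finset.Icc 1 nw.len) :
    (lessSet Y X : MSOF Δ).holds nw g G ↔ lexSet (G Y) < lexSet (G X) := by
  have e : lexSet (G Y) < lexSet (G X) ↔
      ∃ i, (∀ j, j < i → (j ∈ G Y ↔ j ∈ G X)) ∧ (i ∉ G Y ∧ i ∈ G X) := by
    change Pi.Lex _ _ _ _ ↔ _
    simp [Pi.Lex, lexSet, Bool.lt_iff]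
  rw [e]
  simp only [lessSet, holds, Function.update_self, ne_eq, not_false_eq_true,
    Function.update_of_ne, zero_ne_one]
  constructor
  · rintro ⟨i, hi, h1, h2, h3⟩
    refine ⟨i, fun j hj => ?_, h2, h1⟩
    by_cases hjj : j ∈ Finset.Icc 1 nw.len
    · have := h3 j hjj
      rcases this with h | h
      · omega
      · tauto
    · exact ⟨fun h => absurd (hY h) hjj, fun h => absurd (hX h) hjj⟩
  · rintro ⟨i, h1, h2, h3⟩
    refine ⟨i, hX h3, h3, h2, fun j hj => ?_⟩
    by_cases hji : i ≤ j
    · exact Or.inl hji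
    · have := h1 j (by omega)
      right; tauto

end MSOF

theorem sem_exF_min {K Δ : Type} [CommSemiring K] (nw : NestedWord Δ) (x y : ℕ) (ψ : MSOF Δ)
    (g : ℕ → ℕ) (G : ℕ → Finset ℕ) (h : (MSOF.exF x ψ).maxF < y) :
    ∑ i ∈ Finset.Icc 1 nw.len, (ind K (ψ.holds nw (Function.update g x i) G) *
      ∏ j ∈ Finset.Icc 1 nw.len, ind K (¬ (MSOF.and (.not (.lev x y)) (ψ.substF x y)).holds nw
        (Function.update (Function.update g x i) y j) G))
      = ind K ((MSOF.exF x ψ).holds nw g G) := by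
  simp only [MSOF.maxF, max_lt_iff] at h
  rw [MSOF.holds, ← ind_min (Finset.Icc 1 nw.len) (fun i => i) (fun a _ b _ h => h)]
  refine Finset.sum_congr rfl fun i _ => ?_
  congr 1
  refine Finset.prod_congr rfl fun j _ => ind_congr ?_
  rw [not_iff_not, MSOF.holds, MSOF.holds_substF_fresh _ _ _ _ _ _ h.2]
  have : x ≠ y := by omega
  simp [MSOF.holds, this]

theorem sem_exS_min {K Δ : Type} [CommSemiring K] (nw : NestedWord Δ) (x y : ℕ) (ψ : MSOF Δ)
    (g : ℕ → ℕ) (G : ℕ → Finset ℕ) (h : (MSOF.exS x ψ).maxS < y) :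
    ∑ i ∈ (Finset.Icc 1 nw.len).powerset, (ind K (ψ.holds nw g (Function.update G x i)) *
      ∏ j ∈ (Finset.Icc 1 nw.len).powerset,
        ind K (¬ (MSOF.and (lessSet y x) (ψ.substS x y)).holds nw
        g (Function.update (Function.update G x i) y j)))
      = ind K ((MSOF.exS x ψ).holds nw g G) := by
  simp only [MSOF.maxS, max_lt_iff] at h
  rw [MSOF.holds, ← ind_min (Finset.Icc 1 nw.len).powerset MSOF.lexSet
    (MSOF.lexSet_inj.injOn)]
  refine Finset.sum_congr rfl fun i hi => ?_
  congr 1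
  refine Finset.prod_congr rfl fun j hj => ind_congr ?_
  have hxy : x ≠ y := by omega
  rw [not_iff_not, MSOF.holds, MSOF.holds_substS_fresh _ _ _ _ _ _ h.2, MSOF.holds_lessSet]
  · rw [Function.update_self, Function.update_of_ne hxy, Function.update_self]; exact Iff.rfl
  · simpa using hj
  · simpa [hxy] using hi

/-- Semantics of unambiguous formulae. -/
theorem PlusOf.sem_eq {K Δ : Type} [CommSemiring K] {ψ : MSOF Δ} {φ : WMSO K Δ}
    (h : PlusOf K ψ φ) : ∀ nw g G, φ.sem nw g G = ind K (ψ.holds nw g G) := by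
  refine PlusOf.rec (motive_1 := fun ψ φ _ => ∀ nw g G, φ.sem nw g G = ind K (ψ.holds nw g G))
    (motive_2 := fun ψ φ _ => ∀ nw g G, φ.sem nw g G = ind K (¬ ψ.holds nw g G))
    ?_ ?_ ?_ ?_ ?_ ?_ ?_ ?_ ?_ ?_ ?_ ?_ ?_ ?_ ?_ ?_ ?_ ?_ ?_ ?_ ?_ ?_ ?_ ?_ h
  · intros; rw [WMSO.sem]; exact ind_ite _
  · intros; rw [WMSO.sem]; exact ind_ite _
  · intros; rw [WMSO.sem]; exact ind_ite _
  · intros; rw [WMSO.sem]; exact ind_ite _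
  · intros; rw [WMSO.sem]; exact ind_ite _
  · intro ψ χ _ ih nw g G; exact ih nw g G
  · intro ψ₁ ψ₂ a b c _ _ _ h1 h2 h3 nw g G
    simp only [WMSO.sem, h1, h2, h3, ind_mul, ind_or]; rfl
  · intro ψ₁ ψ₂ a b _ _ h1 h2 nw g G
    simp only [WMSO.sem, h1, h2, ind_mul]; rfl
  · intro x ψ a χ y hy _ _ h1 h2 nw g G
    simp only [WMSO.sem, h1, h2]
    exact sem_exF_min nw x y ψ g G (by omega)
  · intro x ψ a _ h1 nw g G
    simp only [WMSO.sem, h1, ind_prod]; rfl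
  · intro x ψ a χ y hy _ _ h1 h2 nw g G
    simp only [WMSO.sem, h1, h2]
    exact sem_exS_min nw x y ψ g G (by omega)
  · intro x ψ a _ h1 nw g G
    simp only [WMSO.sem, h1, ind_prod]; rfl
  · intro x y nw g G; rw [WMSO.sem]; exact ind_ite_not _
  · intro x y nw g G; rw [WMSO.sem]; exact ind_ite_not _
  · intro x y nw g G; rw [WMSO.sem]; exact ind_ite_not _
  · intro x y nw g G; rw [WMSO.sem]; exact ind_ite_not _
  · intro x y nw g G; rw [WMSO.sem]; exact ind_ite_not _
  · intro ψ χ _ ih nw g G; rw [ih]; simp [MSOF.holds]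
  · intro ψ₁ ψ₂ a b _ _ h1 h2 nw g G
    simp only [WMSO.sem, h1, h2, ind_mul, MSOF.holds, not_or]
  · intro ψ₁ ψ₂ a b c _ _ _ h1 h2 h3 nw g G
    simp only [WMSO.sem, h1, h2, h3, ind_mul]
    have := ind_or (K := K) (¬ ψ₁.holds nw g G) (¬ ψ₂.holds nw g G)
    rw [not_not] at this
    rw [this]; apply ind_congr; simp only [MSOF.holds]; tauto
  · intro x ψ a _ h1 nw g G
    simp only [WMSO.sem, h1, ind_prod, MSOF.holds]; apply ind_congr; push Not; rfl
  · intro x ψ a χ y hy _ _ h1 h2 nw g G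
    simp only [WMSO.sem, h1, h2]
    have := sem_exF_min (K := K) nw x y ψ.not g G (by simp only [MSOF.maxF] at hy ⊢; omega)
    simp only [MSOF.substF] at this
    simp only [MSOF.holds] at this ⊢
    rw [this]; apply ind_congr; push Not; rfl
  · intro x ψ a _ h1 nw g G
    simp only [WMSO.sem, h1, ind_prod, MSOF.holds]; apply ind_congr; push Not; rfl
  · intro x ψ a χ y hy _ _ h1 h2 nw g G
    simp only [WMSO.sem, h1, h2]
    have := sem_exS_min (K := K) nw x y ψ.not g G (by simp only [MSOF.maxS] at hy ⊢; omega)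
    simp only [MSOF.substS] at this
    simp only [MSOF.holds] at this ⊢
    rw [this]; apply ind_congr; push Not; rfl

theorem MinusOf.sem_eq {K Δ : Type} [CommSemiring K] {ψ : MSOF Δ} {φ : WMSO K Δ}
    (h : MinusOf K ψ φ) : ∀ nw g G, φ.sem nw g G = ind K (¬ ψ.holds nw g G) :=
  (PlusOf.not h).sem_eq

/-! ### Part 2: deterministic nested word automata -/

/-- A nesting structure. -/
structure NS where
  n : ℕ
  rel : ℕ → ℕ → Prop
  nest : IsNestingRel n rel

namespace NS
variable (s : NS)

theorem pos {i j : ℕ} (h : s.rel i j) : 1 ≤ i := (s.nest.1 i j h).1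
theorem lt {i j : ℕ} (h : s.rel i j) : i < j := (s.nest.1 i j h).2.1
theorem le {i j : ℕ} (h : s.rel i j) : j ≤ s.n := (s.nest.1 i j h).2.2
theorem inj_right {i j j' : ℕ} (h : s.rel i j) (h' : s.rel i j') : j = j' := s.nest.2.1 i j j' h h'
theorem inj_left {i i' j : ℕ} (h : s.rel i j) (h' : s.rel i' j) : i = i' := s.nest.2.2.1 i i' j h h'
theorem cross {i j i' j' : ℕ} (h : s.rel i j) (h' : s.rel i' j') (hi : i < i') :
    j < i' ∨ j' < j := s.nest.2.2.2 i j i' j' h h' hi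

def call (j : ℕ) : Prop := ∃ i, s.rel j i
def ret (j : ℕ) : Prop := ∃ i, s.rel i j

theorem not_call_ret {i j k : ℕ} (h : s.rel i j) (h' : s.rel j k) : False := by
  have h1 := s.lt h
  have h2 := s.lt h'
  rcases s.cross h h' h1 with h | h <;> omega

open Classical in
/-- The call matching a return. -/
noncomputable def cl (j : ℕ) : ℕ := if h : s.ret j then h.choose else 0

theorem cl_rel {j : ℕ} (h : s.ret j) : s.rel (s.cl j) j := by
  rw [cl, dif_pos h]; exact h.choose_spec

theorem cl_eq {i j : ℕ} (h : s.rel i j) : s.cl j = i := s.inj_left (s.cl_rel ⟨i, h⟩) h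

theorem cl_lt {j : ℕ} (hj : 1 ≤ j) : s.cl j < j := by
  by_cases h : s.ret j
  · exact s.lt (s.cl_rel h)
  · rw [cl, dif_neg h]; exact hj

open Classical in
/-- The innermost call open after position `k` (or `0`). -/
noncomputable def top (k : ℕ) : ℕ := Nat.findGreatest (fun i => ∃ j, s.rel i j ∧ k < j) k

theorem top_le (k : ℕ) : s.top k ≤ k := by
  classical
  unfold top
  exact Nat.findGreatest_le k

theorem top_spec {k : ℕ} (h : s.top k ≠ 0) : ∃ j, s.rel (s.top k) j ∧ k < j := by
  classical
  unfold top at h ⊢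
  exact Nat.findGreatest_of_ne_zero (P := fun i => ∃ j, s.rel i j ∧ k < j) rfl h

theorem le_top {k i j : ℕ} (h : s.rel i j) (h1 : i ≤ k) (h2 : k < j) : i ≤ s.top k := by
  classical
  exact Nat.le_findGreatest (P := fun i => ∃ j, s.rel i j ∧ k < j) h1 ⟨j, h, h2⟩

/-- Same open arcs, same top. -/
theorem top_congr {k k' : ℕ} (h : ∀ i j, s.rel i j → ((i ≤ k ∧ k < j) ↔ (i ≤ k' ∧ k' < j))) :
    s.top k = s.top k' := by
  apply le_antisymm
  · by_cases h0 : s.top k = 0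
    · omega
    · obtain ⟨j, hj, hk⟩ := s.top_spec h0
      have := (h _ _ hj).1 ⟨s.top_le k, hk⟩
      exact s.le_top hj this.1 this.2
  · by_cases h0 : s.top k' = 0
    · omega
    · obtain ⟨j, hj, hk⟩ := s.top_spec h0
      have := (h _ _ hj).2 ⟨s.top_le k', hk⟩
      exact s.le_top hj this.1 this.2

theorem top_call {k : ℕ} (h : s.call k) : s.top k = k := by
  obtain ⟨j, hj⟩ := h
  exact le_antisymm (s.top_le k) (s.le_top hj le_rfl (s.lt hj))

theorem top_int {k : ℕ} (h1 : ¬ s.call (k + 1)) (h2 : ¬ s.ret (k + 1)) :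
    s.top (k + 1) = s.top k := by
  apply s.top_congr
  intro i j hij
  have a1 : i ≠ k + 1 := fun h => h1 ⟨j, h ▸ hij⟩
  have a2 : j ≠ k + 1 := fun h => h2 ⟨i, h ▸ hij⟩
  omega

theorem top_before_ret {i k : ℕ} (h : s.rel i (k + 1)) : s.top k = i := by
  have hlt := s.lt h
  have h1 := s.le_top h (by omega) (Nat.lt_succ_self k)
  by_contra hne
  have h0 : s.top k ≠ 0 := by have := s.pos h; omega
  obtain ⟨j, hj, hk⟩ := s.top_spec h0
  have h3 := s.top_le k
  have h4 : j ≠ k + 1 := by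
    intro e
    rw [e] at hj
    exact hne (s.inj_left hj h)
  rcases s.cross h hj (by omega) with h5 | h5 <;> omega

theorem top_ret {i k : ℕ} (h : s.rel i (k + 1)) : s.top (k + 1) = s.top (i - 1) := by
  have hlt := s.lt h
  have hp := s.pos h
  apply s.top_congr
  intro i' j' hij
  have a1 : i' ≠ k + 1 := by
    intro e
    rw [e] at hij
    exact s.not_call_ret h hij
  have a2 : j' ≠ i := by
    intro e
    rw [e] at hij
    exact s.not_call_ret hij h
  have hl := s.lt hij
  constructor
  · rintro ⟨b1, b2⟩
    have a3 : i' ≠ i := by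
      intro e
      rw [e] at hij
      have := s.inj_right h hij
      omega
    rcases lt_or_gt_of_ne a3 with h5 | h5
    · omega
    · rcases s.cross h hij h5 with h6 | h6 <;> omega
  · rintro ⟨b1, b2⟩
    rcases s.cross hij h (by omega) with h6 | h6 <;> omega

theorem top_end : s.top s.n = 0 := by
  by_contra h
  obtain ⟨j, hj, hk⟩ := s.top_spec h
  have := s.le hj
  omega

theorem top_zero : s.top 0 = 0 := Nat.le_zero.mp (s.top_le 0)

/-- Returns inside the current level have their call inside the current level. -/
theorem top_le_cl {i j k : ℕ} (h : s.rel i j) (hj : s.top k ≤ j) (hk : j ≤ k) : s.top k ≤ i := by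
  by_contra hlt
  have h0 : s.top k ≠ 0 := by omega
  obtain ⟨j', hj', hk'⟩ := s.top_spec h0
  rcases s.cross h hj' (by omega) with h6 | h6
  · omega
  · omega

end NS

/-- Deterministic nested word automaton with output. -/
structure DA (Γ α : Type) : Type 1 where
  P : Type
  [fin : Fintype P]
  st : P
  dc : P → Γ → P
  di : P → Γ → P
  dr : P → P → Γ → P
  out : P → α

attribute [instance] DA.fin

namespace DA
variable {Γ Γ' α β : Type} (D : DA Γ α) (s : NS)

open Classical in
/-- One deterministic step. -/
noncomputable def step (c : Γ) (ρ : ℕ → D.P) (j : ℕ) : D.P :=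
  if s.call j then D.dc (ρ (j - 1)) c
  else if s.ret j then D.dr (ρ (j - 1)) (ρ (s.cl j - 1)) c
  else D.di (ρ (j - 1)) c

theorem step_call {c : Γ} {ρ : ℕ → D.P} {j : ℕ} (h : s.call j) :
    D.step s c ρ j = D.dc (ρ (j - 1)) c := by simp [step, h]

theorem step_ret {c : Γ} {ρ : ℕ → D.P} {i j : ℕ} (h : s.rel i j) :
    D.step s c ρ j = D.dr (ρ (j - 1)) (ρ (i - 1)) c := by
  have h1 : ¬ s.call j := fun ⟨k, hk⟩ => s.not_call_ret h hk
  have h2 : s.ret j := ⟨i, h⟩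
  simp [step, h1, h2, s.cl_eq h]

theorem step_int {c : Γ} {ρ : ℕ → D.P} {j : ℕ} (h : ¬ s.call j) (h' : ¬ s.ret j) :
    D.step s c ρ j = D.di (ρ (j - 1)) c := by simp [step, h, h']

theorem step_congr (c : Γ) {ρ ρ' : ℕ → D.P} {j : ℕ} (h : ρ (j - 1) = ρ' (j - 1))
    (h' : ∀ i, s.rel i j → ρ (i - 1) = ρ' (i - 1)) : D.step s c ρ j = D.step s c ρ' j := by
  by_cases h1 : s.call j
  · rw [step_call _ _ h1, step_call _ _ h1, h]
  · by_cases h2 : s.ret j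
    · obtain ⟨i, hi⟩ := h2
      rw [step_ret _ _ hi, step_ret _ _ hi, h, h' i hi]
    · rw [step_int _ _ h1 h2, step_int _ _ h1 h2, h]

/-- The deterministic run. -/
noncomputable def run (σ : ℕ → Γ) : ℕ → D.P
  | 0 => D.st
  | k + 1 => D.step s (σ (k + 1)) (fun i => run σ (min i k)) (k + 1)
termination_by k => k
decreasing_by omega

theorem run_zero (σ : ℕ → Γ) : D.run s σ 0 = D.st := by rw [run]

theorem run_succ (σ : ℕ → Γ) (k : ℕ) :
    D.run s σ (k + 1) = D.step s (σ (k + 1)) (D.run s σ) (k + 1) := by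
  rw [run]
  apply step_congr
  · simp
  · intro i hi
    have := s.lt hi
    rw [min_eq_left (by omega)]

theorem run_step (σ : ℕ → Γ) {j : ℕ} (hj : 1 ≤ j) :
    D.run s σ j = D.step s (σ j) (D.run s σ) j := by
  obtain ⟨k, rfl⟩ : ∃ k, j = k + 1 := ⟨j - 1, by omega⟩
  exact D.run_succ s σ k

theorem run_call (σ : ℕ → Γ) {k : ℕ} (h : s.call (k + 1)) :
    D.run s σ (k + 1) = D.dc (D.run s σ k) (σ (k + 1)) := by
  rw [run_succ, step_call _ _ h]; rfl

theorem run_int (σ : ℕ → Γ) {k : ℕ} (h : ¬ s.call (k + 1)) (h' : ¬ s.ret (k + 1)) :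
    D.run s σ (k + 1) = D.di (D.run s σ k) (σ (k + 1)) := by
  rw [run_succ, step_int _ _ h h']; rfl

theorem run_ret (σ : ℕ → Γ) {i k : ℕ} (h : s.rel i (k + 1)) :
    D.run s σ (k + 1) = D.dr (D.run s σ k) (D.run s σ (i - 1)) (σ (k + 1)) := by
  rw [run_succ, step_ret _ _ h]; rfl

/-- Uniqueness of runs up to `m`. -/
theorem run_unique (σ : ℕ → Γ) (ρ : ℕ → D.P) (m : ℕ) (h0 : ρ 0 = D.st)
    (h : ∀ j, 1 ≤ j → j ≤ m → ρ j = D.step s (σ j) ρ j) :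
    ∀ k, k ≤ m → ρ k = D.run s σ k := by
  intro k
  induction k using Nat.strong_induction_on with
  | _ k ih =>
    intro hk
    rcases Nat.eq_zero_or_pos k with h1 | h1
    · subst h1; rw [h0, run_zero]
    · rw [h k h1 hk, run_step _ _ _ h1]
      apply step_congr
      · exact ih _ (by omega) (by omega)
      · intro i hi
        have := s.lt hi
        exact ih _ (by omega) (by omega)

/-- Induction principle for runs. -/
theorem run_invariant (σ : ℕ → Γ) (I : ℕ → D.P → Prop) (h0 : I 0 D.st)
    (hc : ∀ k p, s.call (k + 1) → I k p → I (k + 1) (D.dc p (σ (k + 1))))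
    (hi : ∀ k p, ¬ s.call (k + 1) → ¬ s.ret (k + 1) → I k p → I (k + 1) (D.di p (σ (k + 1))))
    (hr : ∀ k i p p', s.rel i (k + 1) → I k p → I (i - 1) p' → I (k + 1) (D.dr p p' (σ (k + 1)))) :
    ∀ k, I k (D.run s σ k) := by
  intro k
  induction k using Nat.strong_induction_on with
  | _ k ih =>
    rcases Nat.eq_zero_or_pos k with h1 | h1
    · subst h1; rw [run_zero]; exact h0
    · obtain ⟨k, rfl⟩ : ∃ m, k = m + 1 := ⟨k - 1, by omega⟩
      by_cases h1 : s.call (k + 1)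
      · rw [run_call _ _ _ h1]; exact hc _ _ h1 (ih k (by omega))
      · by_cases h2 : s.ret (k + 1)
        · obtain ⟨i, hik⟩ := h2
          have := s.lt hik
          rw [run_ret _ _ _ hik]
          exact hr _ _ _ _ hik (ih k (by omega)) (ih _ (by omega))
        · rw [run_int _ _ _ h1 h2]; exact hi _ _ h1 h2 (ih k (by omega))

/-- Change the output. -/
def mapOut (D : DA Γ α) (f : D.P → β) : DA Γ β where
  P := D.P
  st := D.st
  dc := D.dc
  di := D.di
  dr := D.dr
  out := f

theorem run_mapOut (D : DA Γ α) (f : D.P → β) (s : NS) (σ : ℕ → Γ) (k : ℕ) :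
    (D.mapOut f).run s σ k = D.run s σ k := by
  refine DA.run_invariant (D.mapOut f) s σ (fun k (p : D.P) => p = D.run s σ k) ?_ ?_ ?_ ?_ k
  · rw [DA.run_zero]; rfl
  · rintro k p h rfl; rw [DA.run_call _ _ _ h]; rfl
  · rintro k p h h' rfl; rw [DA.run_int _ _ _ h h']; rfl
  · rintro k i p p' h rfl rfl; rw [DA.run_ret _ _ _ h]; rfl

/-- Relabel the input. -/
def comapA (D : DA Γ' α) (f : Γ → Γ') : DA Γ α where
  P := D.P
  st := D.st
  dc := fun p c => D.dc p (f c)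
  di := fun p c => D.di p (f c)
  dr := fun p q c => D.dr p q (f c)
  out := D.out

/-- Product. -/
def prodA (D : DA Γ α) (E : DA Γ β) : DA Γ (α × β) where
  P := D.P × E.P
  st := (D.st, E.st)
  dc := fun p c => (D.dc p.1 c, E.dc p.2 c)
  di := fun p c => (D.di p.1 c, E.di p.2 c)
  dr := fun p q c => (D.dr p.1 q.1 c, E.dr p.2 q.2 c)
  out := fun p => (D.out p.1, E.out p.2)

/-- Linear automaton. -/
def linA (P : Type) [Fintype P] (st : P) (d : P → Γ → P) (out : P → α) : DA Γ α where
  P := P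
  st := st
  dc := d
  di := d
  dr := fun p _ c => d p c
  out := out

/-- Marking the first position. -/
noncomputable def firstA (D : DA (Γ × Prop) α) : DA Γ α where
  P := D.P × Prop
  st := (D.st, True)
  dc := fun p c => (D.dc p.1 (c, p.2), False)
  di := fun p c => (D.di p.1 (c, p.2), False)
  dr := fun p q c => (D.dr p.1 q.1 (c, p.2), False)
  out := fun p => D.out p.1

/-- Search for an arch. -/
noncomputable def nuA (R R' : Γ → Prop) : DA Γ Prop where
  P := Prop × Prop
  st := (False, False)
  dc := fun p c => (R c, p.2)
  di := fun p _ => p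
  dr := fun p q c => (q.1, p.2 ∨ (p.1 ∧ R' c))
  out := fun p => p.2

/-- Subset construction. -/
noncomputable def exA {B : Type} (D : DA (Γ × B) Prop) : DA Γ Prop where
  P := Set (D.P × D.P)
  st := {x | x.1 = x.2}
  dc := fun _ c => {x | ∃ b, D.dc x.1 (c, b) = x.2}
  di := fun S c => {x | ∃ b q, (x.1, q) ∈ S ∧ D.di q (c, b) = x.2}
  dr := fun S S' c => {x | ∃ b q r, (x.1, q) ∈ S' ∧ (q, r) ∈ S ∧ D.dr r q (c, b) = x.2}
  out := fun S => ∃ q, (D.st, q) ∈ S ∧ D.out q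
  fin := by
    classical
    exact Fintype.ofFinite _

end DA

/-- `F` is computed by a deterministic automaton. -/
def DRep {Γ α : Type} (F : NS → (ℕ → Γ) → α) : Prop :=
  ∃ D : DA Γ α, ∀ s σ, D.out (D.run s σ s.n) = F s σ

namespace DRep
variable {Γ Γ' α β δ : Type}

theorem map {F : NS → (ℕ → Γ) → α} (hF : DRep F) (f : α → β) :
    DRep (fun s σ => f (F s σ)) := by
  obtain ⟨D, hD⟩ := hF
  refine ⟨D.mapOut (fun p => f (D.out p)), fun s σ => ?_⟩
  beta_reduce
  rw [← hD]
  exact congrArg (fun p => f (D.out p)) (D.run_mapOut _ s σ s.n)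

theorem comap {F : NS → (ℕ → Γ') → α} (hF : DRep F) (f : Γ → Γ') :
    DRep (fun s (σ : ℕ → Γ) => F s (fun j => f (σ j))) := by
  obtain ⟨D, hD⟩ := hF
  refine ⟨D.comapA f, fun s σ => ?_⟩
  beta_reduce
  rw [← hD]
  refine congrArg D.out ?_
  refine DA.run_invariant (D.comapA f) s σ (fun k (p : D.P) => p = D.run s (fun j => f (σ j)) k)
    ?_ ?_ ?_ ?_ s.n
  · rw [DA.run_zero]; rfl
  · rintro k p h rfl; rw [DA.run_call _ _ _ h]; rfl
  · rintro k p h h' rfl; rw [DA.run_int _ _ _ h h']; rfl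
  · rintro k i p p' h rfl rfl; rw [DA.run_ret _ _ _ h]; rfl

theorem const (a : α) : DRep (fun _ (_ : ℕ → Γ) => a) :=
  ⟨DA.linA Unit () (fun _ _ => ()) (fun _ => a), fun _ _ => rfl⟩

theorem pair {F : NS → (ℕ → Γ) → α} {G : NS → (ℕ → Γ) → β} (hF : DRep F) (hG : DRep G) :
    DRep (fun s σ => (F s σ, G s σ)) := by
  obtain ⟨D, hD⟩ := hF
  obtain ⟨E, hE⟩ := hG
  refine ⟨D.prodA E, fun s σ => ?_⟩
  beta_reduce
  rw [← hD, ← hE]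
  refine congrArg (fun p : D.P × E.P => (D.out p.1, E.out p.2))
    (a₂ := (D.run s σ s.n, E.run s σ s.n)) ?_
  refine DA.run_invariant (D.prodA E) s σ (fun k (p : D.P × E.P) => p = (D.run s σ k, E.run s σ k))
    ?_ ?_ ?_ ?_ s.n
  · rw [DA.run_zero, DA.run_zero]; rfl
  · rintro k p h rfl; rw [DA.run_call _ _ _ h, DA.run_call _ _ _ h]; rfl
  · rintro k p h h' rfl; rw [DA.run_int _ _ _ h h', DA.run_int _ _ _ h h']; rfl
  · rintro k i p p' h rfl rfl; rw [DA.run_ret _ _ _ h, DA.run_ret _ _ _ h]; rfl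

theorem map₂ {F : NS → (ℕ → Γ) → α} {G : NS → (ℕ → Γ) → β} (hF : DRep F) (hG : DRep G)
    (f : α → β → δ) : DRep (fun s σ => f (F s σ) (G s σ)) :=
  (hF.pair hG).map (fun p => f p.1 p.2)

theorem congr {F G : NS → (ℕ → Γ) → α} (hF : DRep F) (h : ∀ s σ, F s σ = G s σ) : DRep G := by
  have : F = G := by funext s σ; exact h s σ
  exact this ▸ hF

/-- The final state itself. -/
theorem self (D : DA Γ α) : DRep (fun s σ => D.run s σ s.n) :=
  ⟨D.mapOut (fun p => p), fun s σ => D.run_mapOut _ s σ s.n⟩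

/-- Marking the first position. -/
theorem first {F : NS → (ℕ → Γ × Prop) → α} (hF : DRep F) :
    DRep (fun s (σ : ℕ → Γ) => F s (fun j => (σ j, j = 1))) := by
  obtain ⟨D, hD⟩ := hF
  refine ⟨D.firstA, fun s σ => ?_⟩
  beta_reduce
  rw [← hD]
  refine congrArg (fun p : D.P × Prop => D.out p.1)
    (a₂ := (D.run s (fun j => (σ j, j = 1)) s.n, s.n = 0)) ?_
  refine DA.run_invariant D.firstA s σ (fun k (p : D.P × Prop) =>
    p = (D.run s (fun j => (σ j, j = 1)) k, k = 0)) ?_ ?_ ?_ ?_ s.n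
  · rw [DA.run_zero]; simp [DA.firstA]
  · rintro k p h rfl; rw [DA.run_call _ _ _ h]; simp [DA.firstA]
  · rintro k p h h' rfl; rw [DA.run_int _ _ _ h h']; simp [DA.firstA]
  · rintro k i p p' h rfl rfl; rw [DA.run_ret _ _ _ h]; simp [DA.firstA]

/-- A linear automaton. -/
theorem linear (P : Type) [Fintype P] (st : P) (d : P → Γ → P) (out : P → α)
    (R : (ℕ → Γ) → ℕ → P) (h0 : ∀ σ, R σ 0 = st)
    (h1 : ∀ σ k, R σ (k + 1) = d (R σ k) (σ (k + 1))) :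
    DRep (fun s σ => out (R σ s.n)) := by
  refine ⟨DA.linA P st d out, fun s σ => ?_⟩
  refine congrArg out ?_
  refine DA.run_invariant (DA.linA P st d out) s σ (fun k (p : P) => p = R σ k) ?_ ?_ ?_ ?_ s.n
  · rw [h0]; rfl
  · rintro k p h rfl; rw [h1]; rfl
  · rintro k p h h' rfl; rw [h1]; rfl
  · rintro k i p p' h rfl -; rw [h1]; rfl

/-- The set of values occurring. -/
theorem values {B : Type} [Fintype B] (f : Γ → B) :
    DRep (fun s (σ : ℕ → Γ) => {v : B | ∃ j, 1 ≤ j ∧ j ≤ s.n ∧ f (σ j) = v}) := by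
  refine linear (Set B) ∅ (fun S c => S ∪ {f c}) (fun S => S)
    (fun σ k => {v : B | ∃ j, 1 ≤ j ∧ j ≤ k ∧ f (σ j) = v}) ?_ ?_
  · intro σ; ext v; simp
  · intro σ k; ext v
    simp only [Set.mem_ofPred_eq, Set.mem_union, Set.mem_singleton_iff]
    constructor
    · rintro ⟨j, h1, h2, h3⟩
      by_cases h : j = k + 1
      · subst h; exact Or.inr h3.symm
      · exact Or.inl ⟨j, h1, by omega, h3⟩
    · rintro (⟨j, h1, h2, h3⟩ | h)
      · exact ⟨j, h1, by omega, h3⟩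
      · exact ⟨k + 1, by omega, le_rfl, h.symm⟩

theorem ex1 (R : Γ → Prop) :
    DRep (fun s (σ : ℕ → Γ) => ∃ j, 1 ≤ j ∧ j ≤ s.n ∧ R (σ j)) := by
  refine ((values R).map (fun S => True ∈ S)).congr fun s σ => ?_
  simp

theorem ex2 (R R' : Γ → Prop) :
    DRep (fun s (σ : ℕ → Γ) => ∃ i j, 1 ≤ i ∧ i < j ∧ j ≤ s.n ∧ R (σ i) ∧ R' (σ j)) := by
  refine linear (Prop × Prop) (False, False) (fun S c => (S.1 ∨ R c, S.2 ∨ (S.1 ∧ R' c)))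
    (fun S => S.2) (fun σ k => (∃ i, 1 ≤ i ∧ i ≤ k ∧ R (σ i),
      ∃ i j, 1 ≤ i ∧ i < j ∧ j ≤ k ∧ R (σ i) ∧ R' (σ j))) ?_ ?_
  · intro σ; ext
    · simp
    · simp
  · intro σ k; ext
    · simp only
      constructor
      · rintro ⟨j, h1, h2, h3⟩
        by_cases h : j = k + 1
        · subst h; exact Or.inr h3
        · exact Or.inl ⟨j, h1, by omega, h3⟩
      · rintro (⟨j, h1, h2, h3⟩ | h)
        · exact ⟨j, h1, by omega, h3⟩
        · exact ⟨k + 1, by omega, le_rfl, h⟩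
    · simp only
      constructor
      · rintro ⟨i, j, h1, h2, h3, h4, h5⟩
        by_cases h : j = k + 1
        · subst h; exact Or.inr ⟨⟨i, h1, by omega, h4⟩, h5⟩
        · exact Or.inl ⟨i, j, h1, h2, by omega, h4, h5⟩
      · rintro (⟨i, j, h1, h2, h3, h4, h5⟩ | ⟨⟨i, h1, h2, h3⟩, h⟩)
        · exact ⟨i, j, h1, h2, by omega, h4, h5⟩
        · exact ⟨i, k + 1, h1, by omega, le_rfl, h3, h⟩

theorem exNu (R R' : Γ → Prop) :
    DRep (fun s (σ : ℕ → Γ) => ∃ i j, s.rel i j ∧ R (σ i) ∧ R' (σ j)) := by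
  refine ⟨DA.nuA R R', fun s σ => ?_⟩
  have key := DA.run_invariant (DA.nuA R R') s σ
    (fun k (p : Prop × Prop) => (p.1 ↔ s.top k ≠ 0 ∧ R (σ (s.top k))) ∧
      (p.2 ↔ ∃ i j, s.rel i j ∧ j ≤ k ∧ R (σ i) ∧ R' (σ j))) ?_ ?_ ?_ ?_ s.n
  · refine propext (key.2.trans ?_)
    constructor
    · rintro ⟨i, j, h1, h2, h3⟩; exact ⟨i, j, h1, h3⟩
    · rintro ⟨i, j, h1, h3⟩; exact ⟨i, j, h1, s.le h1, h3⟩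
  · refine ⟨by simp [s.top_zero, DA.nuA], ?_⟩
    simp only [DA.nuA, false_iff]
    rintro ⟨i, j, h1, h2, -⟩
    have := s.lt h1
    omega
  · rintro k p h ⟨h1, h2⟩
    rw [s.top_call h]
    refine ⟨by simp [DA.nuA], ?_⟩
    dsimp only [DA.nuA]
    rw [h2]
    refine exists_congr fun i => exists_congr fun j => and_congr_right fun hij => ?_
    have : j ≠ k + 1 := by
      rintro rfl
      obtain ⟨m, hm⟩ := h
      exact s.not_call_ret hij hm
    have e : j ≤ k ↔ j ≤ k + 1 := by omega
    rw [e]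
  · rintro k p h h' ⟨h1, h2⟩
    rw [s.top_int h h']
    refine ⟨h1, ?_⟩
    dsimp only [DA.nuA]
    rw [h2]
    refine exists_congr fun i => exists_congr fun j => and_congr_right fun hij => ?_
    have : j ≠ k + 1 := by
      rintro rfl
      exact h' ⟨i, hij⟩
    have e : j ≤ k ↔ j ≤ k + 1 := by omega
    rw [e]
  · rintro k i p p' h ⟨h1, h2⟩ ⟨h3, h4⟩
    rw [s.top_ret h]
    refine ⟨h3, ?_⟩
    dsimp only [DA.nuA]
    rw [h2, h1, s.top_before_ret h]
    have hpos := s.pos h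
    constructor
    · rintro (⟨a, b, h5, h6, h7⟩ | ⟨⟨-, h5⟩, h6⟩)
      · exact ⟨a, b, h5, by omega, h7⟩
      · exact ⟨i, k + 1, h, le_rfl, h5, h6⟩
    · rintro ⟨a, b, h5, h6, h7, h8⟩
      by_cases hb : b = k + 1
      · subst hb
        have := s.inj_left h5 h
        subst this
        exact Or.inr ⟨⟨by omega, h7⟩, h8⟩
      · exact Or.inl ⟨a, b, h5, by omega, h7, h8⟩

/-- Projection: the subset construction. -/
theorem ex {B : Type} {F : NS → (ℕ → Γ × B) → Prop} (hF : DRep F) :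
    DRep (fun s (σ : ℕ → Γ) => ∃ τ : ℕ → B, F s (fun j => (σ j, τ j))) := by
  classical
  by_cases hB : Nonempty B
  swap
  · refine (const False).congr fun s σ => ?_
    simp only [eq_iff_iff, false_iff, not_exists]
    intro τ
    exact (hB ⟨τ 0⟩).elim
  obtain ⟨D, hD⟩ := hF
  refine ⟨D.exA, fun s σ => ?_⟩
  have key := DA.run_invariant D.exA s σ
    (fun k (S : Set (D.P × D.P)) => ∀ p q, (p, q) ∈ S ↔ ∃ (ρ : ℕ → D.P) (τ : ℕ → B),
      ρ (s.top k - 1) = p ∧ ρ k = q ∧ ∀ j, s.top k - 1 < j → j ≤ k →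
        ρ j = D.step s (σ j, τ j) ρ j) ?_ ?_ ?_ ?_ s.n
  · refine propext ?_
    refine (exists_congr fun q => and_congr_left fun _ => key D.st q).trans ?_
    rw [s.top_end]
    constructor
    · rintro ⟨q, ⟨ρ, τ, h1, h2, h3⟩, h4⟩
      refine ⟨τ, ?_⟩
      rw [← hD, ← D.run_unique s (fun j => (σ j, τ j)) ρ s.n h1 (fun j hj => h3 j (by omega))
        s.n le_rfl, h2]
      exact h4
    · rintro ⟨τ, h⟩
      rw [← hD] at h
      refine ⟨_, ⟨D.run s (fun j => (σ j, τ j)), τ, D.run_zero s _, rfl, ?_⟩, h⟩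
      intro j h1 h2
      exact D.run_step s _ (by omega)
  · intro p q
    rw [s.top_zero]
    constructor
    · rintro h
      have h : p = q := h
      subst h
      -- any label will do
      exact ⟨fun _ => p, fun _ => hB.some, rfl, rfl, fun j h1 h2 => by omega⟩
    · rintro ⟨ρ, τ, h1, h2, h3⟩
      exact h1.symm.trans h2
  · intro k S h ih p q
    rw [s.top_call h]
    constructor
    · rintro ⟨b, hb⟩
      refine ⟨fun j => if j = k + 1 then q else p, fun _ => b, by simp, by simp, ?_⟩
      intro j h1 h2
      have : j = k + 1 := by omega
      subst this
      rw [D.step_call s h]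
      simp only [if_true]
      simpa using hb.symm
    · rintro ⟨ρ, τ, h1, h2, h3⟩
      refine ⟨τ (k + 1), ?_⟩
      have := h3 (k + 1) (by omega) le_rfl
      rw [D.step_call s h, h1, h2] at this
      exact this.symm
  · intro k S h h' ih p q
    rw [s.top_int h h']
    have ht := s.top_le k
    constructor
    · rintro ⟨b, q', hS, hq⟩
      obtain ⟨ρ, τ, h1, h2, h3⟩ := (ih _ _).1 hS
      refine ⟨Function.update ρ (k + 1) q, Function.update τ (k + 1) b, ?_, by simp, ?_⟩
      · rw [Function.update_of_ne (by omega)]; exact h1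
      · intro j h4 h5
        by_cases hj : j = k + 1
        · subst hj
          rw [D.step_int s h h', Function.update_self, Function.update_self,
            Function.update_of_ne (by omega), Nat.add_sub_cancel, h2]
          exact hq.symm
        · rw [Function.update_of_ne hj, Function.update_of_ne hj, h3 j h4 (by omega)]
          apply D.step_congr
          · rw [Function.update_of_ne (by omega)]
          · intro i hi
            have := s.lt hi
            rw [Function.update_of_ne (by omega)]
    · rintro ⟨ρ, τ, h1, h2, h3⟩
      refine ⟨τ (k + 1), ρ k, (ih _ _).2 ⟨ρ, τ, h1, rfl, fun j h4 h5 => h3 j h4 (by omega)⟩, ?_⟩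
      have := h3 (k + 1) (by omega) le_rfl
      rw [D.step_int s h h', h2] at this
      exact this.symm
  · intro k i S S' h ih ih' p q
    have htk := s.top_before_ret h
    rw [s.top_ret h]
    rw [htk] at ih
    have ht := s.top_le (i - 1)
    have hlt := s.lt h
    have hpos := s.pos h
    constructor
    · rintro ⟨b, q', r, hS', hS, hq⟩
      obtain ⟨ρ₁, τ₁, h1, h2, h3⟩ := (ih' _ _).1 hS'
      obtain ⟨ρ₂, τ₂, h4, h5, h6⟩ := (ih _ _).1 hS
      refine ⟨fun j => if j ≤ i - 1 then ρ₁ j else if j ≤ k then ρ₂ j else q,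
        fun j => if j ≤ i - 1 then τ₁ j else if j ≤ k then τ₂ j else b, ?_, ?_, ?_⟩
      · beta_reduce; rw [if_pos (by omega)]; exact h1
      · beta_reduce; rw [if_neg (by omega), if_neg (by omega)]
      · intro j h7 h8
        by_cases hj1 : j ≤ i - 1
        · simp only [hj1, if_true]
          rw [h3 j h7 hj1]
          apply D.step_congr
          · rw [if_pos (by omega)]
          · intro i' hi'
            have := s.lt hi'
            rw [if_pos (by omega)]
        · by_cases hj2 : j ≤ k
          · simp only [hj1, hj2, if_true, if_false]
            rw [h6 j (by omega) hj2]
            have aux : ∀ m, i - 1 ≤ m → m ≤ k → ρ₂ m =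
                if m ≤ i - 1 then ρ₁ m else if m ≤ k then ρ₂ m else q := by
              intro m hm1 hm2
              by_cases hm : m = i - 1
              · subst hm; simp [h2, h4]
              · rw [if_neg (by omega), if_pos hm2]
            apply D.step_congr
            · exact aux _ (by omega) (by omega)
            · intro i' hi'
              have h9 := s.lt hi'
              have h10 := s.top_le_cl (k := k) hi' (by omega) hj2
              exact aux _ (by omega) (by omega)
          · have : j = k + 1 := by omega
            subst this
            rw [D.step_ret s h]
            simp only [hj1, hj2, if_false, Nat.add_sub_cancel, le_refl, if_true]
            rw [if_neg (by omega), h5, h2]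
            exact hq.symm
    · rintro ⟨ρ, τ, h1, h2, h3⟩
      refine ⟨τ (k + 1), ρ (i - 1), ρ k, (ih' _ _).2 ⟨ρ, τ, h1, rfl, ?_⟩,
        (ih _ _).2 ⟨ρ, τ, rfl, rfl, ?_⟩, ?_⟩
      · exact fun j h4 h5 => h3 j h4 (by omega)
      · exact fun j h4 h5 => h3 j (by omega) (by omega)
      · have := h3 (k + 1) (by omega) le_rfl
        rw [D.step_ret s h, h2] at this
        exact this.symm

end DRep

/-! ### Part 3: Nivat normal form -/

/-- Extend a finite labelling to all of `ℕ`. -/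
def ext {B : Type} [Inhabited B] {n : ℕ} (τ : Fin n → B) (j : ℕ) : B :=
  if h : 1 ≤ j ∧ j ≤ n then τ ⟨j - 1, by omega⟩ else default

theorem ext_in {B : Type} [Inhabited B] {n : ℕ} (τ : Fin n → B) (i : Fin n) :
    ext τ (i + 1) = τ i := by
  have := i.2
  rw [ext, dif_pos (by omega)]
  rfl

theorem ext_of {B : Type} [Inhabited B] {n : ℕ} (τ : Fin n → B) {j : ℕ} (h1 : 1 ≤ j) (h2 : j ≤ n) :
    ext τ j = τ ⟨j - 1, by omega⟩ := by
  rw [ext, dif_pos ⟨h1, h2⟩]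

theorem ext_pair {B C : Type} [Inhabited B] [Inhabited C] {n : ℕ} (τ : Fin n → B × C) (j : ℕ) :
    ext τ j = (ext (fun i => (τ i).1) j, ext (fun i => (τ i).2) j) := by
  unfold ext
  split_ifs <;> rfl

theorem sum_Icc_fin {K : Type} [AddCommMonoid K] (n : ℕ) (f : ℕ → K) :
    ∑ i ∈ Finset.Icc 1 n, f i = ∑ i : Fin n, f (i + 1) := by
  induction n with
  | zero => simp
  | succ n ih => rw [Finset.sum_Icc_succ_top (by omega), ih, Fin.sum_univ_castSucc]; rfl

theorem prod_Icc_fin {K : Type} [CommMonoid K] (n : ℕ) (f : ℕ → K) :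
    ∏ i ∈ Finset.Icc 1 n, f i = ∏ i : Fin n, f (i + 1) := by
  induction n with
  | zero => simp
  | succ n ih => rw [Finset.prod_Icc_succ_top (by omega), ih, Fin.prod_univ_castSucc]; rfl

namespace DRep
variable {Γ α : Type}

theorem loc {F : NS → (ℕ → Γ) → α} (hF : DRep F) (s : NS) {σ σ' : ℕ → Γ}
    (h : ∀ j, 1 ≤ j → j ≤ s.n → σ j = σ' j) : F s σ = F s σ' := by
  obtain ⟨D, hD⟩ := hF
  rw [← hD, ← hD]
  congr 1
  apply D.run_unique s σ' (D.run s σ) s.n (D.run_zero s σ) _ s.n le_rfl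
  intro j h1 h2
  rw [D.run_step s σ h1, h j h1 h2]

/-- Exactly one marked position. -/
theorem single (R : Γ → Prop) :
    DRep (fun s (σ : ℕ → Γ) => ∃ i, 1 ≤ i ∧ i ≤ s.n ∧ ∀ j, 1 ≤ j → j ≤ s.n → (R (σ j) ↔ j = i)) := by
  refine ((ex1 R).map₂ (ex2 R R) (fun p q => p ∧ ¬ q)).congr fun s σ => propext ?_
  constructor
  · rintro ⟨⟨i, h1, h2, h3⟩, h4⟩
    refine ⟨i, h1, h2, fun j h5 h6 => ⟨fun h7 => ?_, fun h => h ▸ h3⟩⟩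
    by_contra hne
    rcases lt_or_gt_of_ne hne with h | h
    · exact h4 ⟨j, i, h5, h, h2, h7, h3⟩
    · exact h4 ⟨i, j, h1, h, h6, h3, h7⟩
  · rintro ⟨i, h1, h2, h3⟩
    refine ⟨⟨i, h1, h2, (h3 i h1 h2).2 rfl⟩, ?_⟩
    rintro ⟨a, b, h4, h5, h6, h7, h8⟩
    have e1 := (h3 a h4 (by omega)).1 h7
    have e2 := (h3 b (by omega) h6).1 h8
    omega

/-- Existential first-order quantification. -/
theorem exOne {F : NS → (ℕ → Γ × Prop) → Prop} (hF : DRep F) :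
    DRep (fun s (σ : ℕ → Γ) => ∃ i, 1 ≤ i ∧ i ≤ s.n ∧ F s (fun j => (σ j, j = i))) := by
  refine ((single (fun c : Γ × Prop => c.2)).map₂ hF (fun p q => p ∧ q)).ex.congr
    fun s σ => propext ?_
  constructor
  · rintro ⟨τ, ⟨i, h1, h2, h3⟩, h4⟩
    refine ⟨i, h1, h2, ?_⟩
    rw [← hF.loc s (σ := fun j => (σ j, τ j))]
    · exact h4
    · intro j h5 h6
      rw [Prod.mk.injEq]
      exact ⟨rfl, propext (h3 j h5 h6)⟩
  · rintro ⟨i, h1, h2, h3⟩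
    exact ⟨fun j => j = i, ⟨i, h1, h2, fun j _ _ => Iff.rfl⟩, h3⟩

end DRep

/-- Series in Nivat normal form: projections of deterministic ones. -/
def NRep {K Γ : Type} [CommSemiring K] (F : NS → (ℕ → Γ) → K) : Prop :=
  ∃ (B : Type) (_ : Fintype B) (_ : Inhabited B) (w : B → K) (G : NS → (ℕ → Γ × B) → K),
    DRep G ∧ ∀ s σ, F s σ = ∑ τ : Fin s.n → B, (∏ i, w (τ i)) * G s (fun j => (σ j, ext τ j))

namespace NRep
variable {K Γ Γ' : Type} [CommSemiring K]

theorem congr {F G : NS → (ℕ → Γ) → K} (hF : NRep F) (h : ∀ s σ, F s σ = G s σ) : NRep G := by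
  have : F = G := by funext s σ; exact h s σ
  exact this ▸ hF

theorem ofD {F : NS → (ℕ → Γ) → K} (hF : DRep F) : NRep F := by
  refine ⟨Unit, inferInstance, inferInstance, fun _ => 1, _, hF.comap Prod.fst, fun s σ => ?_⟩
  simp

theorem comap {F : NS → (ℕ → Γ') → K} (hF : NRep F) (f : Γ → Γ') :
    NRep (fun s (σ : ℕ → Γ) => F s (fun j => f (σ j))) := by
  obtain ⟨B, _, _, w, G, hG, h⟩ := hF
  exact ⟨B, _, _, w, _, hG.comap (fun c : Γ × B => (f c.1, c.2)), fun s σ => h s _⟩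

theorem first {F : NS → (ℕ → Γ × Prop) → K} (hF : NRep F) :
    NRep (fun s (σ : ℕ → Γ) => F s (fun j => (σ j, j = 1))) := by
  obtain ⟨B, _, _, w, G, hG, h⟩ := hF
  exact ⟨B, _, _, w, _, (hG.comap (fun c : (Γ × B) × Prop => ((c.1.1, c.2), c.1.2))).first,
    fun s σ => h s _⟩

/-- Summation over all labellings. -/
theorem sumL {C : Type} [Fintype C] [Inhabited C] {F : NS → (ℕ → Γ × C) → K} (hF : NRep F) :
    NRep (fun s (σ : ℕ → Γ) => ∑ τ : Fin s.n → C, F s (fun j => (σ j, ext τ j))) := by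
  obtain ⟨B, _, _, w, G, hG, h⟩ := hF
  refine ⟨C × B, inferInstance, inferInstance, fun c => w c.2, _,
    hG.comap (fun c : Γ × C × B => ((c.1, c.2.1), c.2.2)), fun s σ => ?_⟩
  simp only [h]
  rw [← Fintype.sum_prod_type', ← (Equiv.arrowProdEquivProdArrow (Fin s.n) (fun _ => C) (fun _ => B)).sum_comp]
  refine Finset.sum_congr rfl fun τ _ => ?_
  simp only [ext_pair τ]
  rfl

theorem mul {F F' : NS → (ℕ → Γ) → K} (hF : NRep F) (hF' : NRep F') :
    NRep (fun s σ => F s σ * F' s σ) := by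
  obtain ⟨B, _, _, w, G, hG, h⟩ := hF
  obtain ⟨B', _, _, w', G', hG', h'⟩ := hF'
  refine ⟨B × B', inferInstance, inferInstance, fun c => w c.1 * w' c.2, _,
    (hG.comap (fun c : Γ × B × B' => (c.1, c.2.1))).map₂
      (hG'.comap (fun c : Γ × B × B' => (c.1, c.2.2))) (fun a b => a * b), fun s σ => ?_⟩
  simp only [h, h']
  rw [Finset.sum_mul_sum, ← Fintype.sum_prod_type', ← (Equiv.arrowProdEquivProdArrow (Fin s.n) (fun _ => B) (fun _ => B')).sum_comp]
  refine Finset.sum_congr rfl fun τ _ => ?_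
  simp only [ext_pair τ, Finset.prod_mul_distrib, Equiv.arrowProdEquivProdArrow_apply]
  ring

/-- Enlarging the label alphabet. -/
theorem lift {B B' : Type} [Fintype B] [Inhabited B] [Fintype B'] [Inhabited B'] (e : B → B')
    (r : B' → B) (hr : ∀ b, r (e b) = b) (w : B → K) (w' : B' → K) (hw : ∀ b, w' (e b) = w b)
    {G : NS → (ℕ → Γ × B) → K} (hG : DRep G) : ∃ G' : NS → (ℕ → Γ × B') → K, DRep G' ∧
      ∀ (s : NS) (σ : ℕ → Γ), ∑ τ : Fin s.n → B, (∏ i, w (τ i)) * G s (fun j => (σ j, ext τ j)) =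
        ∑ τ : Fin s.n → B', (∏ i, w' (τ i)) * G' s (fun j => (σ j, ext τ j)) := by
  refine ⟨_, (DRep.ex1 (fun c : Γ × B' => c.2 ∉ Set.range e)).map₂
    (hG.comap (fun c : Γ × B' => (c.1, r c.2))) (fun p a => ind K (¬ p) * a), fun s σ => ?_⟩
  refine Fintype.sum_of_injective (fun τ : Fin s.n → B => fun i => e (τ i)) ?_ _ _ ?_ ?_
  · intro τ τ' h
    funext i
    have := congrFun h i
    rw [← hr (τ i), ← hr (τ' i)]
    exact congrArg r this
  · intro τ hτ
    rw [ind_false, zero_mul, mul_zero]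
    rw [not_not]
    by_contra hcon
    apply hτ
    refine ⟨fun i => r (τ i), ?_⟩
    funext i
    by_contra hi
    apply hcon
    refine ⟨i + 1, by omega, by have := i.2; omega, ?_⟩
    beta_reduce
    rw [ext_in]
    rintro ⟨b, hb⟩
    simp only at hb
    apply hi
    beta_reduce
    rw [← hb, hr]
  · intro τ
    simp only [hw]
    rw [ind_true, one_mul]
    · congr 1
      apply hG.loc
      intro j h1 h2
      beta_reduce
      rw [ext_of _ h1 h2, ext_of _ h1 h2, hr]
    · rintro ⟨j, h1, h2, h3⟩
      apply h3
      beta_reduce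
      rw [ext_of _ h1 h2]
      exact ⟨_, rfl⟩

theorem add {F F' : NS → (ℕ → Γ) → K} (hF : NRep F) (hF' : NRep F') :
    NRep (fun s σ => F s σ + F' s σ) := by
  obtain ⟨B, _, _, w, G, hG, h⟩ := hF
  obtain ⟨B', _, _, w', G', hG', h'⟩ := hF'
  obtain ⟨H, hH, e⟩ := lift (Sum.inl : B → B ⊕ B') (Sum.elim id (fun _ => default)) (fun _ => rfl)
    w (Sum.elim w w') (fun _ => rfl) hG
  obtain ⟨H', hH', e'⟩ := lift (Sum.inr : B' → B ⊕ B') (Sum.elim (fun _ => default) id) (fun _ => rfl)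
    w' (Sum.elim w w') (fun _ => rfl) hG'
  refine ⟨B ⊕ B', inferInstance, inferInstance, Sum.elim w w', _,
    hH.map₂ hH' (fun a b => a + b), fun s σ => ?_⟩
  simp only [h, h', e, e', mul_add, Finset.sum_add_distrib]

/-- Existential first-order quantification. -/
theorem exF {F : NS → (ℕ → Γ × Prop) → K} (hl : ∀ s (σ σ' : ℕ → Γ × Prop),
    (∀ j, 1 ≤ j → j ≤ s.n → σ j = σ' j) → F s σ = F s σ') (hF : NRep F) :
    NRep (fun s (σ : ℕ → Γ) => ∑ i ∈ Finset.Icc 1 s.n, F s (fun j => (σ j, j = i))) := by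
  refine ((ofD ((DRep.single (fun c : Γ × Prop => c.2)).map (ind K))).mul hF).sumL.congr
    fun s σ => ?_
  rw [sum_Icc_fin]
  symm
  refine Fintype.sum_of_injective (fun (i : Fin s.n) (k : Fin s.n) => k = i) ?_ _ _ ?_ ?_
  · intro i i' h
    have := congrFun h i
    simpa using this
  · intro τ hτ
    rw [ind_false, zero_mul]
    rintro ⟨i, h1, h2, h3⟩
    apply hτ
    refine ⟨⟨i - 1, by omega⟩, ?_⟩
    funext k
    have hk := k.2
    have := h3 (k + 1) (by omega) (by omega)
    simp only [ext_in] at this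
    beta_reduce
    rw [this, Fin.ext_iff]
    simp only [eq_iff_iff]
    omega
  · intro i
    have key : ∀ j, 1 ≤ j → j ≤ s.n → ((ext (fun k : Fin s.n => k = i) j) ↔ j = i + 1) := by
      intro j h1 h2
      rw [ext_of _ h1 h2, Fin.ext_iff]
      simp only
      omega
    rw [ind_true, one_mul]
    · apply hl
      intro j h1 h2
      rw [Prod.mk.injEq]
      exact ⟨rfl, (propext (key j h1 h2)).symm⟩
    · exact ⟨i + 1, by omega, by have := i.2; omega, key⟩

theorem exS {F : NS → (ℕ → Γ × Prop) → K} (hl : ∀ s (σ σ' : ℕ → Γ × Prop),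
    (∀ j, 1 ≤ j → j ≤ s.n → σ j = σ' j) → F s σ = F s σ') (hF : NRep F) :
    NRep (fun s (σ : ℕ → Γ) => ∑ T ∈ (Finset.Icc 1 s.n).powerset, F s (fun j => (σ j, j ∈ T))) := by
  classical
  refine hF.sumL.congr fun s σ => ?_
  refine Finset.sum_bij' (fun τ _ => (Finset.Icc 1 s.n).filter (fun j => ext τ j))
    (fun T _ k => (k : ℕ) + 1 ∈ T) ?_ ?_ ?_ ?_ ?_
  · intro τ _; simp
  · intro T _; simp
  · intro τ _
    funext k
    have := k.2
    rw [Finset.mem_filter, ext_in]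
    simp
  · intro T hT
    ext j
    rw [Finset.mem_powerset] at hT
    rw [Finset.mem_filter]
    constructor
    · rintro ⟨h, h'⟩
      rw [Finset.mem_Icc] at h
      rw [ext_of _ h.1 h.2] at h'
      simp only at h'
      rwa [Nat.sub_add_cancel h.1] at h'
    · intro h
      have h1 := hT h
      refine ⟨h1, ?_⟩
      rw [Finset.mem_Icc] at h1
      rw [ext_of _ h1.1 h1.2]
      simp only
      rwa [Nat.sub_add_cancel h1.1]
  · intro τ _
    apply hl
    intro j h1 h2
    rw [Prod.mk.injEq]
    refine ⟨rfl, ?_⟩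
    simp [h1, h2]

theorem loc {F : NS → (ℕ → Γ) → K} (hF : NRep F) (s : NS) (σ σ' : ℕ → Γ)
    (h : ∀ j, 1 ≤ j → j ≤ s.n → σ j = σ' j) : F s σ = F s σ' := by
  obtain ⟨B, _, _, w, G, hG, e⟩ := hF
  rw [e, e]
  refine Finset.sum_congr rfl fun τ _ => ?_
  congr 1
  apply hG.loc
  intro j h1 h2
  rw [h j h1 h2]

/-- Universal first-order quantification of a deterministic series. -/
theorem alF {F : NS → (ℕ → Γ × Prop) → K} (hF : DRep F) :
    NRep (fun s (σ : ℕ → Γ) => ∏ i ∈ Finset.Icc 1 s.n, F s (fun j => (σ j, j = i))) := by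
  classical
  obtain ⟨D, hD⟩ := hF
  have hself := DRep.self D
  have h1 : DRep (fun s (σ : ℕ → (Γ × D.P) × Prop) =>
      ∃ q, (True, q) ∈ {v : Prop × D.P | ∃ j, 1 ≤ j ∧ j ≤ s.n ∧ ((σ j).2, (σ j).1.2) = v} ∧
        q ≠ D.run s (fun j => ((σ j).1.1, (σ j).2)) s.n) :=
    (DRep.values (fun c : (Γ × D.P) × Prop => (c.2, c.1.2))).map₂
      (hself.comap (fun c : (Γ × D.P) × Prop => (c.1.1, c.2)))
      (fun S p => ∃ q, (True, q) ∈ S ∧ q ≠ p)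
  have h2 := h1.exOne.map (fun p => ind K (¬ p))
  refine ⟨D.P, inferInstance, ⟨D.st⟩, D.out, _, h2, fun s σ => ?_⟩
  let _ : Inhabited D.P := ⟨D.st⟩
  rw [Finset.sum_eq_single (fun i : Fin s.n => D.run s (fun j => (σ j, j = (i : ℕ) + 1)) s.n)]
  · beta_reduce
    rw [ind_true, mul_one, prod_Icc_fin]
    · exact Finset.prod_congr rfl fun i _ => (hD _ _).symm
    · rintro ⟨i, h3, h4, q, ⟨j, h5, h6, h7⟩, h8⟩
      apply h8
      rw [Prod.mk.injEq] at h7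
      have h9 : j = i := by simpa using h7.1
      subst h9
      rw [← h7.2]
      simp only
      rw [ext_of _ h5 h6]
      simp only
      rw [Nat.sub_add_cancel h5]
  · intro τ _ hτ
    rw [ind_false, mul_zero]
    rw [not_not]
    by_contra hcon
    apply hτ
    funext i
    by_contra hne
    apply hcon
    have := i.2
    refine ⟨i + 1, by omega, by omega, τ i, ⟨i + 1, by omega, by omega, ?_⟩, hne⟩
    simp [ext_in]
  · intro h; exact absurd (Finset.mem_univ _) h

end NRep

/-! ### Part 4: restricted formulae define regular series -/

/-- The nesting structure of a nested word. -/
def NestedWord.ns {Δ : Type} (nw : NestedWord Δ) : NS := ⟨nw.len, nw.rel, nw.isNest⟩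

/-- Letters with encoded valuations. -/
abbrev Ltr (Δ : Type) : Type := Δ × (ℕ → Prop) × (ℕ → Prop)

/-- Encoding of a nested word with valuation. -/
def enc {Δ : Type} (nw : NestedWord Δ) (g : ℕ → ℕ) (G : ℕ → Finset ℕ) (j : ℕ) : Ltr Δ :=
  (nw.letter j, fun x => g x = j, fun X => j ∈ G X)

def setF {Δ : Type} (x : ℕ) (c : Ltr Δ × Prop) : Ltr Δ :=
  (c.1.1, Function.update c.1.2.1 x c.2, c.1.2.2)

def setS {Δ : Type} (X : ℕ) (c : Ltr Δ × Prop) : Ltr Δ :=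
  (c.1.1, c.1.2.1, Function.update c.1.2.2 X c.2)

theorem enc_updF {Δ : Type} (nw : NestedWord Δ) (g : ℕ → ℕ) (G : ℕ → Finset ℕ) (x i j : ℕ) :
    enc nw (Function.update g x i) G j = setF x (enc nw g G j, j = i) := by
  simp only [enc, setF, Prod.mk.injEq, true_and, and_true]
  funext y
  by_cases h : y = x
  · subst h; simp [eq_comm]
  · simp [h]

theorem enc_updS {Δ : Type} (nw : NestedWord Δ) (g : ℕ → ℕ) (G : ℕ → Finset ℕ) (X j : ℕ)
    (T : Finset ℕ) :
    enc nw g (Function.update G X T) j = setS X (enc nw g G j, j ∈ T) := by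
  simp only [enc, setS, Prod.mk.injEq, true_and]
  funext y
  by_cases h : y = X
  · subst h; simp
  · simp [h]

/-- Valuations into positions. -/
def Val {Δ : Type} (nw : NestedWord Δ) (g : ℕ → ℕ) : Prop := ∀ x, 1 ≤ g x ∧ g x ≤ nw.len

theorem Val.update {Δ : Type} {nw : NestedWord Δ} {g : ℕ → ℕ} (h : Val nw g) {x i : ℕ}
    (h1 : 1 ≤ i) (h2 : i ≤ nw.len) : Val nw (Function.update g x i) := by
  intro y
  by_cases hy : y = x
  · subst hy; simp [h1, h2]
  · simp only [Function.update_of_ne hy]; exact h y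

theorem DRep.exSet {Γ : Type} {F : NS → (ℕ → Γ × Prop) → Prop} (hF : DRep F) :
    DRep (fun s (σ : ℕ → Γ) => ∃ T ∈ (Finset.Icc 1 s.n).powerset, F s (fun j => (σ j, j ∈ T))) := by
  classical
  refine hF.ex.congr fun s σ => propext ?_
  constructor
  · rintro ⟨τ, h⟩
    refine ⟨(Finset.Icc 1 s.n).filter (fun j => τ j), by simp, ?_⟩
    rw [← hF.loc s (σ := fun j => (σ j, τ j))]
    · exact h
    · intro j h1 h2
      simp [h1, h2]
  · rintro ⟨T, -, h⟩
    exact ⟨_, h⟩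

/-- Classical formulae are recognized by deterministic automata. -/
theorem MSOF.drep {Δ : Type} (ψ : MSOF Δ) : ∃ F : NS → (ℕ → Ltr Δ) → Prop, DRep F ∧
    ∀ nw g G, Val nw g → (F nw.ns (enc nw g G) ↔ ψ.holds nw g G) := by
  induction ψ with
  | eqv x y =>
    refine ⟨_, DRep.ex1 (fun c => c.2.1 x ∧ c.2.1 y), fun nw g G hg => ?_⟩
    constructor
    · rintro ⟨j, -, -, h1, h2⟩; exact h1.trans h2.symm
    · intro h; exact ⟨g x, (hg x).1, (hg x).2, rfl, h.symm⟩
  | lab a x =>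
    refine ⟨_, DRep.ex1 (fun c => c.2.1 x ∧ c.1 = a), fun nw g G hg => ?_⟩
    constructor
    · rintro ⟨j, -, -, h1, h2⟩
      have h1 : g x = j := h1
      subst h1; exact h2
    · intro h; exact ⟨g x, (hg x).1, (hg x).2, rfl, h⟩
  | lev x y =>
    refine ⟨_, (DRep.ex1 (fun c => c.2.1 x ∧ c.2.1 y)).map₂
      (DRep.ex2 (fun c => c.2.1 x) (fun c => c.2.1 y)) (fun p q => p ∨ q), fun nw g G hg => ?_⟩
    constructor
    · rintro (⟨j, -, -, h1, h2⟩ | ⟨i, j, -, h, -, h1, h2⟩)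
      · have h1 : g x = j := h1
        have h2 : g y = j := h2
        exact (h1.trans h2.symm).le
      · have h1 : g x = i := h1
        have h2 : g y = j := h2
        change g x ≤ g y
        omega
    · intro h
      rcases Nat.lt_or_ge (g x) (g y) with h1 | h1
      · exact Or.inr ⟨g x, g y, (hg x).1, h1, (hg y).2, rfl, rfl⟩
      · exact Or.inl ⟨g x, (hg x).1, (hg x).2, rfl, le_antisymm h1 h⟩
  | nuv x y =>
    refine ⟨_, DRep.exNu (fun c => c.2.1 x) (fun c => c.2.1 y), fun nw g G hg => ?_⟩
    constructor
    · rintro ⟨i, j, h, h1, h2⟩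
      have h1 : g x = i := h1
      have h2 : g y = j := h2
      subst h1; subst h2
      exact h
    · intro h; exact ⟨g x, g y, h, rfl, rfl⟩
  | mem x X =>
    refine ⟨_, DRep.ex1 (fun c => c.2.1 x ∧ c.2.2 X), fun nw g G hg => ?_⟩
    constructor
    · rintro ⟨j, -, -, h1, h2⟩
      have h1 : g x = j := h1
      subst h1; exact h2
    · intro h; exact ⟨g x, (hg x).1, (hg x).2, rfl, h⟩
  | not ψ ih =>
    obtain ⟨F, hF, h⟩ := ih
    exact ⟨_, hF.map (fun p => ¬ p), fun nw g G hg => not_congr (h nw g G hg)⟩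
  | or ψ₁ ψ₂ ih₁ ih₂ =>
    obtain ⟨F, hF, h⟩ := ih₁
    obtain ⟨F', hF', h'⟩ := ih₂
    exact ⟨_, hF.map₂ hF' (fun p q => p ∨ q), fun nw g G hg => or_congr (h nw g G hg) (h' nw g G hg)⟩
  | and ψ₁ ψ₂ ih₁ ih₂ =>
    obtain ⟨F, hF, h⟩ := ih₁
    obtain ⟨F', hF', h'⟩ := ih₂
    exact ⟨_, hF.map₂ hF' (fun p q => p ∧ q), fun nw g G hg => and_congr (h nw g G hg) (h' nw g G hg)⟩
  | exF x ψ ih =>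
    obtain ⟨F, hF, h⟩ := ih
    refine ⟨_, (hF.comap (setF x)).exOne, fun nw g G hg => ?_⟩
    refine exists_congr fun i => ?_
    rw [Finset.mem_Icc, ← and_assoc]
    refine and_congr_right fun hi => ?_
    rw [← h _ _ _ (hg.update hi.1 hi.2)]
    simp only [← enc_updF]
  | exS X ψ ih =>
    obtain ⟨F, hF, h⟩ := ih
    refine ⟨_, (hF.comap (setS X)).exSet, fun nw g G hg => ?_⟩
    refine exists_congr fun T => and_congr_right fun hT => ?_
    rw [← h _ _ _ hg]
    simp only [← enc_updS]
  | alF x ψ ih =>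
    obtain ⟨F, hF, h⟩ := ih
    refine ⟨_, ((hF.map (fun p => ¬ p)).comap (setF x)).exOne.map (fun p => ¬ p),
      fun nw g G hg => ?_⟩
    simp only [MSOF.holds, not_exists, not_and, not_not, Finset.mem_Icc, and_imp]
    refine forall_congr' fun i => forall_congr' fun h1 => forall_congr' fun h2 => ?_
    rw [← h _ _ _ (hg.update h1 h2)]
    simp only [← enc_updF]
  | alS X ψ ih =>
    obtain ⟨F, hF, h⟩ := ih
    refine ⟨_, ((hF.map (fun p => ¬ p)).comap (setS X)).exSet.map (fun p => ¬ p),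
      fun nw g G hg => ?_⟩
    simp only [MSOF.holds, not_exists, not_and, not_not]
    refine forall_congr' fun i => forall_congr' fun h1 => ?_
    rw [← h _ _ _ hg]
    simp only [← enc_updS]

theorem SyntUnamb.sem_eq {K Δ : Type} [CommSemiring K] {φ : WMSO K Δ} (h : SyntUnamb φ) :
    ∃ ψ : MSOF Δ, ∀ nw g G, φ.sem nw g G = ind K (ψ.holds nw g G) := by
  obtain ⟨ψ, h | h⟩ := h
  · exact ⟨ψ, h.sem_eq⟩
  · exact ⟨.not ψ, h.sem_eq⟩

theorem drep_of_holds {K Δ : Type} [CommSemiring K] {f : NestedWord Δ → (ℕ → ℕ) → (ℕ → Finset ℕ) → K}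
    (ψ : MSOF Δ) (h : ∀ nw g G, f nw g G = ind K (ψ.holds nw g G)) :
    ∃ F : NS → (ℕ → Ltr Δ) → K, DRep F ∧
      ∀ nw g G, Val nw g → F nw.ns (enc nw g G) = f nw g G := by
  obtain ⟨F, hF, h'⟩ := ψ.drep
  refine ⟨_, hF.map (ind K), fun nw g G hg => ?_⟩
  rw [h]
  exact ind_congr (h' nw g G hg)

theorem AUMSO.drep {K Δ : Type} [CommSemiring K] {φ : WMSO K Δ} (h : AUMSO φ) :
    ∃ F : NS → (ℕ → Ltr Δ) → K, DRep F ∧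
      ∀ nw g G, Val nw g → F nw.ns (enc nw g G) = φ.sem nw g G := by
  induction h with
  | const k => exact ⟨_, DRep.const k, fun nw g G _ => rfl⟩
  | unamb h =>
    obtain ⟨ψ, h⟩ := h.sem_eq
    exact drep_of_holds ψ h
  | and _ _ ih₁ ih₂ =>
    obtain ⟨F, hF, h⟩ := ih₁
    obtain ⟨F', hF', h'⟩ := ih₂
    refine ⟨_, hF.map₂ hF' (fun p q => p * q), fun nw g G hg => ?_⟩
    rw [h _ _ _ hg, h' _ _ _ hg]
    rfl
  | or _ _ ih₁ ih₂ =>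
    obtain ⟨F, hF, h⟩ := ih₁
    obtain ⟨F', hF', h'⟩ := ih₂
    refine ⟨_, hF.map₂ hF' (fun p q => p + q), fun nw g G hg => ?_⟩
    rw [h _ _ _ hg, h' _ _ _ hg]
    rfl

theorem nrep_of_unamb {K Δ : Type} [CommSemiring K] {φ : WMSO K Δ} (h : SyntUnamb φ) :
    ∃ F : NS → (ℕ → Ltr Δ) → K, NRep F ∧
      ∀ nw g G, Val nw g → F nw.ns (enc nw g G) = φ.sem nw g G := by
  obtain ⟨F, hF, h⟩ := (AUMSO.unamb h).drep
  exact ⟨F, NRep.ofD hF, h⟩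

theorem SRMSO.nrep {K Δ : Type} [CommSemiring K] (φ : WMSO K Δ) (h : SRMSO φ) :
    ∃ F : NS → (ℕ → Ltr Δ) → K, NRep F ∧
      ∀ nw g G, Val nw g → F nw.ns (enc nw g G) = φ.sem nw g G := by
  induction φ with
  | const k => exact ⟨_, NRep.ofD (DRep.const k), fun nw g G _ => rfl⟩
  | eqv x y => exact nrep_of_unamb ⟨_, Or.inl (.eqv x y)⟩
  | lab a x => exact nrep_of_unamb ⟨_, Or.inl (.lab a x)⟩
  | lev x y => exact nrep_of_unamb ⟨_, Or.inl (.lev x y)⟩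
  | nuv x y => exact nrep_of_unamb ⟨_, Or.inl (.nuv x y)⟩
  | mem x y => exact nrep_of_unamb ⟨_, Or.inl (.mem x y)⟩
  | neq x y => exact nrep_of_unamb ⟨_, Or.inr (.eqv x y)⟩
  | nlab a x => exact nrep_of_unamb ⟨_, Or.inr (.lab a x)⟩
  | nle x y => exact nrep_of_unamb ⟨_, Or.inr (.lev x y)⟩
  | nnu x y => exact nrep_of_unamb ⟨_, Or.inr (.nuv x y)⟩
  | nmem x y => exact nrep_of_unamb ⟨_, Or.inr (.mem x y)⟩
  | or φ₁ φ₂ ih₁ ih₂ =>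
    obtain ⟨F, hF, h1⟩ := ih₁ h.1
    obtain ⟨F', hF', h2⟩ := ih₂ h.2
    refine ⟨_, hF.add hF', fun nw g G hg => ?_⟩
    rw [h1 _ _ _ hg, h2 _ _ _ hg]
    rfl
  | and φ₁ φ₂ ih₁ ih₂ =>
    obtain ⟨F, hF, h1⟩ := ih₁ h.1
    obtain ⟨F', hF', h2⟩ := ih₂ h.2
    refine ⟨_, hF.mul hF', fun nw g G hg => ?_⟩
    rw [h1 _ _ _ hg, h2 _ _ _ hg]
    rfl
  | exF x φ ih =>
    obtain ⟨F, hF, h1⟩ := ih h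
    refine ⟨_, (hF.comap (setF x)).exF (hF.comap (setF x)).loc, fun nw g G hg => ?_⟩
    refine Finset.sum_congr rfl fun i hi => ?_
    rw [Finset.mem_Icc] at hi
    rw [← h1 _ _ _ (hg.update hi.1 hi.2)]
    simp only [← enc_updF]
  | exS X φ ih =>
    obtain ⟨F, hF, h1⟩ := ih h
    refine ⟨_, (hF.comap (setS X)).exS (hF.comap (setS X)).loc, fun nw g G hg => ?_⟩
    refine Finset.sum_congr rfl fun i hi => ?_
    rw [← h1 _ _ _ hg]
    simp only [← enc_updS]
  | alF x φ ih =>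
    obtain ⟨F, hF, h1⟩ := h.1.drep
    refine ⟨_, NRep.alF (hF.comap (setF x)), fun nw g G hg => ?_⟩
    refine Finset.prod_congr rfl fun i hi => ?_
    rw [Finset.mem_Icc] at hi
    rw [← h1 _ _ _ (hg.update hi.1 hi.2)]
    simp only [← enc_updF]
  | alS X φ ih =>
    obtain ⟨ψ, hψ⟩ := h.1.sem_eq
    obtain ⟨F, hF, h1⟩ := drep_of_holds (K := K) (f := (WMSO.alS X φ).sem) (MSOF.alS X ψ) (by
      intro nw g G
      simp only [WMSO.sem, hψ, ind_prod]
      rfl)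
    exact ⟨F, NRep.ofD hF, h1⟩

/-- Series in Nivat normal form are regular. -/
theorem NRep.regular {K Δ : Type} [CommSemiring K] {F : NS → (ℕ → Δ) → K} (hF : NRep F) :
    NWRegular (fun nw : NestedWord Δ => F nw.ns nw.letter) := by
  classical
  obtain ⟨B, _, _, w, G, ⟨D, hD⟩, h⟩ := hF
  refine ⟨{
    Q := D.P
    ι := fun q => ind K (q = D.st)
    δcall := fun p a q => ∑ b, ind K (q = D.dc p (a, b)) * w b
    δint := fun p a q => ∑ b, ind K (q = D.di p (a, b)) * w b
    δret := fun p p' a q => ∑ b, ind K (q = D.dr p p' (a, b)) * w b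
    κ := D.out }, fun nw => ?_⟩
  set A : WNWA K Δ := {
    Q := D.P
    ι := fun q => ind K (q = D.st)
    δcall := fun p a q => ∑ b, ind K (q = D.dc p (a, b)) * w b
    δint := fun p a q => ∑ b, ind K (q = D.di p (a, b)) * w b
    δret := fun p p' a q => ∑ b, ind K (q = D.dr p p' (a, b)) * w b
    κ := D.out } with hA
  have hpos : ∀ (ρ : ℕ → D.P) j, A.posWeight nw ρ j =
      ∑ b, ind K (ρ j = D.step nw.ns (nw.letter j, b) ρ j) * w b := by
    intro ρ j
    by_cases h1 : nw.IsCall j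
    · rw [WNWA.posWeight, if_pos h1]
      refine Finset.sum_congr rfl fun b _ => ?_
      rw [D.step_call nw.ns h1]
    · by_cases h2 : nw.IsReturn j
      · rw [WNWA.posWeight, if_neg h1, dif_pos h2]
        refine Finset.sum_congr rfl fun b _ => ?_
        have h3 : nw.ns.rel h2.choose j := h2.choose_spec
        rw [D.step_ret nw.ns h3]
      · rw [WNWA.posWeight, if_neg h1, dif_neg h2]
        refine Finset.sum_congr rfl fun b _ => ?_
        rw [D.step_int nw.ns h1 h2]
  have hrun : ∀ (ρ : ℕ → D.P), A.runWeight nw ρ = ∑ τ : Fin nw.len → B,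
      ind K (∀ i : Fin nw.len, ρ (i + 1) = D.step nw.ns (nw.letter (i + 1), τ i) ρ (i + 1)) *
        ∏ i, w (τ i) := by
    intro ρ
    rw [WNWA.runWeight, prod_Icc_fin]
    simp only [hpos]
    rw [Finset.prod_univ_sum, Fintype.piFinset_univ]
    refine Finset.sum_congr rfl fun τ _ => ?_
    rw [Finset.prod_mul_distrib, ind_prod]
    simp
  beta_reduce
  rw [h, WNWA.behavior]
  simp only [hrun, Finset.mul_sum, Finset.sum_mul]
  rw [Finset.sum_comm]
  refine Finset.sum_congr rfl fun τ _ => ?_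
  set R := D.run nw.ns (fun j => (nw.letter j, ext τ j)) with hR
  rw [← hD]
  have hcl : ∀ (r : Fin (nw.len + 1) → D.P) (k : ℕ) (hk : k ≤ nw.len),
      clampFun r k = r ⟨k, by omega⟩ := by
    intro r k hk
    simp [clampFun, hk]
  rw [Finset.sum_eq_single (fun k : Fin (nw.len + 1) => R k)]
  · rw [ind_true, one_mul]
    · have e1 : A.ι (R ((0 : Fin (nw.len + 1)) : ℕ)) = 1 := ind_true (D.run_zero _ _)
      rw [e1, one_mul]
      rfl
    · intro i
      have := i.2
      rw [hcl _ _ (by omega)]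
      simp only
      rw [hR, D.run_step _ _ (by omega)]
      rw [ext_in]
      apply D.step_congr
      · rw [hcl _ _ (by omega)]
      · intro k hk
        have := nw.ns.lt hk
        rw [hcl _ _ (by omega)]
  · intro r _ hr
    by_cases h0 : r 0 = D.st
    · rw [ind_false, zero_mul, mul_zero, zero_mul]
      intro hall
      apply hr
      have := D.run_unique nw.ns (fun j => (nw.letter j, ext τ j)) (clampFun r) nw.len
        (by rw [hcl _ _ (by omega)]; exact h0) (by
          intro j h1 h2
          have := hall ⟨j - 1, by omega⟩
          simp only [Nat.sub_add_cancel h1] at this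
          rw [this, ext_of τ h1 h2])
      funext k
      rw [hR, ← this k (by omega), hcl _ _ (by omega)]
    · have e1 : A.ι (r 0) = 0 := ind_false h0
      rw [e1, zero_mul, zero_mul]
  · intro h; exact absurd (Finset.mem_univ _) h

theorem regular_of_definable {K Δ : Type} [CommSemiring K] {S : NestedWord Δ → K}
    (h : NWDefinable SRMSO S) : NWRegular S := by
  obtain ⟨φ, hφ, -, hS⟩ := h
  obtain ⟨F, hF, h⟩ := SRMSO.nrep φ hφ
  have h1 := (hF.comap (fun c : Δ × Prop => ((c.1, fun _ => c.2, fun _ => False) : Ltr Δ))).first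
  obtain ⟨A, hA⟩ := h1.regular
  refine ⟨A, fun nw => ?_⟩
  rw [hA, ← hS nw (fun _ => 1) (fun _ => ∅), ← h]
  · refine congrArg (F nw.ns) ?_
    funext j
    simp [enc, eq_comm]
  · intro x
    have := List.length_pos_iff.2 nw.ne
    exact ⟨le_rfl, this⟩

/-! ### Part 5: regular series are definable -/

namespace MSOF
variable {Δ : Type}

/-- No set quantifiers. -/
def nsq : MSOF Δ → Prop
  | not φ => φ.nsq
  | or φ ψ => φ.nsq ∧ ψ.nsq
  | and φ ψ => φ.nsq ∧ ψ.nsq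
  | exF _ φ => φ.nsq
  | alF _ φ => φ.nsq
  | exS _ _ => False
  | alS _ _ => False
  | _ => True

def size : MSOF Δ → ℕ
  | not φ => φ.size + 1
  | or φ ψ => φ.size + ψ.size + 1
  | and φ ψ => φ.size + ψ.size + 1
  | exF _ φ => φ.size + 1
  | alF _ φ => φ.size + 1
  | exS _ φ => φ.size + 1
  | alS _ φ => φ.size + 1
  | _ => 0

def freeF : MSOF Δ → Finset ℕ
  | eqv x y => {x, y}
  | lab _ x => {x}
  | lev x y => {x, y}
  | nuv x y => {x, y}
  | mem x _ => {x}
  | not φ => φ.freeF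
  | or φ ψ => φ.freeF ∪ ψ.freeF
  | and φ ψ => φ.freeF ∪ ψ.freeF
  | exF x φ => φ.freeF.erase x
  | alF x φ => φ.freeF.erase x
  | exS _ φ => φ.freeF
  | alS _ φ => φ.freeF

/-- Free set variables (of formulae without set quantifiers). -/
def freeS : MSOF Δ → Finset ℕ
  | mem _ X => {X}
  | not φ => φ.freeS
  | or φ ψ => φ.freeS ∪ ψ.freeS
  | and φ ψ => φ.freeS ∪ ψ.freeS
  | exF _ φ => φ.freeS
  | alF _ φ => φ.freeS
  | exS X φ => φ.freeS.erase X
  | alS X φ => φ.freeS.erase X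
  | _ => ∅

theorem size_substF (x y : ℕ) (ψ : MSOF Δ) : (ψ.substF x y).size = ψ.size := by
  induction ψ with
  | exF z φ ih => simp only [substF]; split_ifs <;> simp [size, ih]
  | alF z φ ih => simp only [substF]; split_ifs <;> simp [size, ih]
  | _ => simp_all [substF, size]

theorem nsq_substF (x y : ℕ) (ψ : MSOF Δ) (h : ψ.nsq) : (ψ.substF x y).nsq := by
  induction ψ with
  | exF z φ ih => simp only [substF]; split_ifs <;> simp_all [nsq]
  | alF z φ ih => simp only [substF]; split_ifs <;> simp_all [nsq]
  | _ => simp_all [substF, nsq]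

theorem freeS_substF (x y : ℕ) (ψ : MSOF Δ) : (ψ.substF x y).freeS = ψ.freeS := by
  induction ψ with
  | exF z φ ih => simp only [substF]; split_ifs <;> simp_all [freeS]
  | alF z φ ih => simp only [substF]; split_ifs <;> simp_all [freeS]
  | _ => simp_all [substF, freeS]

theorem ite_mem_aux (x y u : ℕ) (V : Finset ℕ) (h : u ∈ V) :
    (if u = x then y else u) ∈ insert y (V.erase x) := by
  split_ifs with hu
  · simp
  · simp [hu, h]

theorem freeF_substF (x y : ℕ) (ψ : MSOF Δ) :
    (ψ.substF x y).freeF ⊆ insert y (ψ.freeF.erase x) := by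
  induction ψ with
  | eqv u v =>
    intro z hz
    simp only [substF, freeF, Finset.mem_insert, Finset.mem_singleton] at hz
    rcases hz with rfl | rfl <;> exact ite_mem_aux _ _ _ _ (by simp [freeF])
  | lev u v =>
    intro z hz
    simp only [substF, freeF, Finset.mem_insert, Finset.mem_singleton] at hz
    rcases hz with rfl | rfl <;> exact ite_mem_aux _ _ _ _ (by simp [freeF])
  | nuv u v =>
    intro z hz
    simp only [substF, freeF, Finset.mem_insert, Finset.mem_singleton] at hz
    rcases hz with rfl | rfl <;> exact ite_mem_aux _ _ _ _ (by simp [freeF])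
  | lab a u =>
    intro z hz
    simp only [substF, freeF, Finset.mem_singleton] at hz
    rcases hz with rfl; exact ite_mem_aux _ _ _ _ (by simp [freeF])
  | mem u X =>
    intro z hz
    simp only [substF, freeF, Finset.mem_singleton] at hz
    rcases hz with rfl; exact ite_mem_aux _ _ _ _ (by simp [freeF])
  | not φ ih => exact ih
  | exS X φ ih => exact ih
  | alS X φ ih => exact ih
  | or φ ψ ih1 ih2 =>
    intro z hz
    simp only [substF, freeF, Finset.mem_union] at hz
    rcases hz with h | h
    · have := ih1 h; simp [freeF] at this ⊢; tauto
    · have := ih2 h; simp [freeF] at this ⊢; tauto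
  | and φ ψ ih1 ih2 =>
    intro z hz
    simp only [substF, freeF, Finset.mem_union] at hz
    rcases hz with h | h
    · have := ih1 h; simp [freeF] at this ⊢; tauto
    · have := ih2 h; simp [freeF] at this ⊢; tauto
  | exF u φ ih =>
    intro z hz
    simp only [substF] at hz
    split_ifs at hz with hu
    · subst hu; simp [freeF] at hz ⊢; tauto
    · simp only [freeF, Finset.mem_erase] at hz
      have := ih hz.2; simp [freeF] at this ⊢; tauto
  | alF u φ ih =>
    intro z hz
    simp only [substF] at hz
    split_ifs at hz with hu
    · subst hu; simp [freeF] at hz ⊢; tauto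
    · simp only [freeF, Finset.mem_erase] at hz
      have := ih hz.2; simp [freeF] at this ⊢; tauto

end MSOF

/-- Side conditions of a weighted version of a classical formula. -/
structure GoodFor {K Δ : Type} (ψ : MSOF Δ) (φ : WMSO K Δ) : Prop where
  nq : NoSetQuant φ
  sr : SRMSO φ
  ff : φ.freeF ⊆ ψ.freeF
  fs : φ.freeS ⊆ ψ.freeS

theorem exists_plus_minus {K Δ : Type} (n : ℕ) : ∀ ψ : MSOF Δ, ψ.size ≤ n → ψ.nsq →
    (∃ φ : WMSO K Δ, PlusOf K ψ φ ∧ GoodFor ψ φ) ∧ (∃ φ : WMSO K Δ, MinusOf K ψ φ ∧ GoodFor ψ φ) := by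
  induction n using Nat.strong_induction_on with
  | _ n IH =>
  intro ψ hn hq
  cases ψ with
  | eqv x y => exact ⟨⟨_, .eqv x y, trivial, trivial, subset_rfl, subset_rfl⟩,
      ⟨_, .eqv x y, trivial, trivial, subset_rfl, subset_rfl⟩⟩
  | lab x y => exact ⟨⟨_, .lab x y, trivial, trivial, subset_rfl, subset_rfl⟩,
      ⟨_, .lab x y, trivial, trivial, subset_rfl, subset_rfl⟩⟩
  | lev x y => exact ⟨⟨_, .lev x y, trivial, trivial, subset_rfl, subset_rfl⟩,
      ⟨_, .lev x y, trivial, trivial, subset_rfl, subset_rfl⟩⟩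
  | nuv x y => exact ⟨⟨_, .nuv x y, trivial, trivial, subset_rfl, subset_rfl⟩,
      ⟨_, .nuv x y, trivial, trivial, subset_rfl, subset_rfl⟩⟩
  | mem x y => exact ⟨⟨_, .mem x y, trivial, trivial, subset_rfl, subset_rfl⟩,
      ⟨_, .mem x y, trivial, trivial, subset_rfl, subset_rfl⟩⟩
  | not ψ =>
    simp only [MSOF.size] at hn
    obtain ⟨⟨a, ha, ga⟩, ⟨b, hb, gb⟩⟩ := IH (n - 1) (by omega) ψ (by omega) hq
    exact ⟨⟨b, .not hb, gb.nq, gb.sr, gb.ff, gb.fs⟩, ⟨a, .not ha, ga.nq, ga.sr, ga.ff, ga.fs⟩⟩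
  | or ψ₁ ψ₂ =>
    simp only [MSOF.size] at hn
    obtain ⟨⟨a, ha, ga⟩, ⟨b, hb, gb⟩⟩ := IH (n - 1) (by omega) ψ₁ (by omega) hq.1
    obtain ⟨⟨c, hc, gc⟩, ⟨d, hd, gd⟩⟩ := IH (n - 1) (by omega) ψ₂ (by omega) hq.2
    refine ⟨⟨_, .or ha hb hc, ⟨ga.nq, gb.nq, gc.nq⟩, ⟨ga.sr, gb.sr, gc.sr⟩, ?_, ?_⟩,
      ⟨_, .or hb hd, ⟨gb.nq, gd.nq⟩, ⟨gb.sr, gd.sr⟩, ?_, ?_⟩⟩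
    · exact Finset.union_subset (ga.ff.trans Finset.subset_union_left)
        (Finset.union_subset_union gb.ff gc.ff)
    · exact Finset.union_subset (ga.fs.trans Finset.subset_union_left)
        (Finset.union_subset_union gb.fs gc.fs)
    · exact Finset.union_subset_union gb.ff gd.ff
    · exact Finset.union_subset_union gb.fs gd.fs
  | and ψ₁ ψ₂ =>
    simp only [MSOF.size] at hn
    obtain ⟨⟨a, ha, ga⟩, ⟨b, hb, gb⟩⟩ := IH (n - 1) (by omega) ψ₁ (by omega) hq.1
    obtain ⟨⟨c, hc, gc⟩, ⟨d, hd, gd⟩⟩ := IH (n - 1) (by omega) ψ₂ (by omega) hq.2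
    refine ⟨⟨_, .and ha hc, ⟨ga.nq, gc.nq⟩, ⟨ga.sr, gc.sr⟩, ?_, ?_⟩,
      ⟨_, .and hb ha hd, ⟨gb.nq, ga.nq, gd.nq⟩, ⟨gb.sr, ga.sr, gd.sr⟩, ?_, ?_⟩⟩
    · exact Finset.union_subset_union ga.ff gc.ff
    · exact Finset.union_subset_union ga.fs gc.fs
    · exact Finset.union_subset (gb.ff.trans Finset.subset_union_left)
        (Finset.union_subset_union ga.ff gd.ff)
    · exact Finset.union_subset (gb.fs.trans Finset.subset_union_left)
        (Finset.union_subset_union ga.fs gd.fs)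
  | exF x ψ =>
    simp only [MSOF.size] at hn
    obtain ⟨⟨a, ha, ga⟩, ⟨b, hb, gb⟩⟩ := IH (n - 1) (by omega) ψ (by omega) hq
    refine ⟨?_, ⟨_, .exF hb, gb.nq, ⟨.unamb ⟨ψ, Or.inr hb⟩, gb.sr⟩,
      Finset.erase_subset_erase _ gb.ff, gb.fs⟩⟩
    set y := (MSOF.exF x ψ).maxF + 1 with hy
    obtain ⟨-, ⟨c, hc, gc⟩⟩ := IH (n - 1) (by omega) (ψ.substF x y)
      (by rw [MSOF.size_substF]; omega) (MSOF.nsq_substF _ _ _ hq)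
    have hm := MinusOf.and (.not (.lev x y)) (.not (.lev x y)) hc
    refine ⟨_, .exF y hy ha hm, ⟨ga.nq, trivial, trivial, gc.nq⟩,
      ⟨ga.sr, .unamb ⟨_, Or.inr hm⟩, trivial, trivial, gc.sr⟩, ?_, ?_⟩
    · intro z hz
      have h1 := @ga.ff z
      have h2 := @gc.ff z
      have h3 := @MSOF.freeF_substF _ x y ψ z
      simp only [WMSO.freeF, MSOF.freeF, Finset.mem_erase, Finset.mem_union, Finset.mem_insert,
        Finset.mem_singleton] at *
      tauto
    · intro z hz
      have h1 := @ga.fs z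
      have h2 := @gc.fs z
      rw [MSOF.freeS_substF] at h2
      simp only [WMSO.freeS, MSOF.freeS, Finset.mem_union, Finset.notMem_empty, false_or] at *
      tauto
  | alF x ψ =>
    simp only [MSOF.size] at hn
    obtain ⟨⟨a, ha, ga⟩, ⟨b, hb, gb⟩⟩ := IH (n - 1) (by omega) ψ (by omega) hq
    refine ⟨⟨_, .alF ha, ga.nq, ⟨.unamb ⟨ψ, Or.inl ha⟩, ga.sr⟩,
      Finset.erase_subset_erase _ ga.ff, ga.fs⟩, ?_⟩
    set y := (MSOF.alF x ψ).maxF + 1 with hy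
    obtain ⟨⟨c, hc, gc⟩, -⟩ := IH (n - 1) (by omega) (ψ.substF x y)
      (by rw [MSOF.size_substF]; omega) (MSOF.nsq_substF _ _ _ hq)
    have hm := MinusOf.and (.not (.lev x y)) (.not (.lev x y)) (.not hc)
    refine ⟨_, .alF y hy hb hm, ⟨gb.nq, trivial, trivial, gc.nq⟩,
      ⟨gb.sr, .unamb ⟨_, Or.inr hm⟩, trivial, trivial, gc.sr⟩, ?_, ?_⟩
    · intro z hz
      have h1 := @gb.ff z
      have h2 := @gc.ff z
      have h3 := @MSOF.freeF_substF _ x y ψ z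
      simp only [WMSO.freeF, MSOF.freeF, Finset.mem_erase, Finset.mem_union, Finset.mem_insert,
        Finset.mem_singleton] at *
      tauto
    · intro z hz
      have h1 := @gb.fs z
      have h2 := @gc.fs z
      rw [MSOF.freeS_substF] at h2
      simp only [WMSO.freeS, MSOF.freeS, Finset.mem_union, Finset.notMem_empty, false_or] at *
      tauto
  | exS x ψ => exact hq.elim
  | alS x ψ => exact hq.elim

open Classical in
/-- A chosen unambiguous version of a classical first-order formula. -/
noncomputable def MSOF.plus (K : Type) {Δ : Type} (ψ : MSOF Δ) (h : ψ.nsq) : WMSO K Δ :=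
  (exists_plus_minus (K := K) ψ.size ψ le_rfl h).1.choose

theorem MSOF.plus_spec (K : Type) {Δ : Type} (ψ : MSOF Δ) (h : ψ.nsq) :
    PlusOf K ψ (ψ.plus K h) ∧ GoodFor ψ (ψ.plus K h) :=
  (exists_plus_minus (K := K) ψ.size ψ le_rfl h).1.choose_spec

/-- Classical side conditions. -/
structure MSOF.Ok {Δ : Type} (V : Finset ℕ) (m : ℕ) (ψ : MSOF Δ) : Prop where
  nq : ψ.nsq
  ff : ψ.freeF ⊆ V
  fs : ψ.freeS ⊆ Finset.range m

/-- Weighted side conditions. -/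
structure WMSO.Ok {K Δ : Type} (V : Finset ℕ) (m : ℕ) (φ : WMSO K Δ) : Prop where
  au : AUMSO φ
  nq : NoSetQuant φ
  sr : SRMSO φ
  ff : φ.freeF ⊆ V
  fs : φ.freeS ⊆ Finset.range m

namespace WMSO.Ok
variable {K Δ : Type} {V : Finset ℕ} {m : ℕ}

theorem plus {ψ : MSOF Δ} (h : ψ.Ok V m) : (ψ.plus K h.nq).Ok V m := by
  obtain ⟨h1, h2⟩ := ψ.plus_spec K h.nq
  exact ⟨.unamb ⟨ψ, Or.inl h1⟩, h2.nq, h2.sr, h2.ff.trans h.ff, h2.fs.trans h.fs⟩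

theorem and {φ φ' : WMSO K Δ} (h : φ.Ok V m) (h' : φ'.Ok V m) : (WMSO.and φ φ').Ok V m :=
  ⟨.and h.au h'.au, ⟨h.nq, h'.nq⟩, ⟨h.sr, h'.sr⟩, Finset.union_subset h.ff h'.ff,
    Finset.union_subset h.fs h'.fs⟩

theorem or {φ φ' : WMSO K Δ} (h : φ.Ok V m) (h' : φ'.Ok V m) : (WMSO.or φ φ').Ok V m :=
  ⟨.or h.au h'.au, ⟨h.nq, h'.nq⟩, ⟨h.sr, h'.sr⟩, Finset.union_subset h.ff h'.ff,
    Finset.union_subset h.fs h'.fs⟩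

theorem const (k : K) : (WMSO.const k : WMSO K Δ).Ok V m :=
  ⟨.const k, trivial, trivial, Finset.empty_subset _, Finset.empty_subset _⟩

end WMSO.Ok

/-- Finite weighted sums of unambiguous formulae. -/
theorem exists_pick {K Δ ι : Type} [CommSemiring K] [Fintype ι] {V : Finset ℕ} {m : ℕ} (ψ : ι → MSOF Δ)
    (h : ∀ i, (ψ i).Ok V m) (k : ι → K) : ∃ φ : WMSO K Δ, φ.Ok V m ∧
      ∀ nw g G, φ.sem nw g G = ∑ i, ind K ((ψ i).holds nw g G) * k i := by
  have key : ∀ l : List ι, ∃ φ : WMSO K Δ, φ.Ok V m ∧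
      ∀ nw g G, φ.sem nw g G = (l.map (fun i => ind K ((ψ i).holds nw g G) * k i)).sum := by
    intro l
    induction l with
    | nil => exact ⟨.const 0, .const 0, fun nw g G => by simp [WMSO.sem]⟩
    | cons i l ih =>
      obtain ⟨φ, h1, h2⟩ := ih
      refine ⟨.or (.and ((ψ i).plus K (h i).nq) (.const (k i))) φ,
        .or (.and (.plus (h i)) (.const _)) h1, fun nw g G => ?_⟩
      simp only [WMSO.sem, List.map_cons, List.sum_cons, h2]
      rw [((ψ i).plus_spec K (h i).nq).1.sem_eq]
  obtain ⟨φ, h1, h2⟩ := key Finset.univ.toList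
  exact ⟨φ, h1, fun nw g G => by rw [h2, Finset.sum_map_toList]⟩

/-- Finite conjunctions. -/
def MSOF.bigAnd {Δ ι : Type} (ψ : ι → MSOF Δ) : List ι → MSOF Δ
  | [] => .eqv 0 0
  | i :: l => .and (ψ i) (bigAnd ψ l)

theorem MSOF.bigAnd_ok {Δ ι : Type} {V : Finset ℕ} {m : ℕ} (h0 : 0 ∈ V) (ψ : ι → MSOF Δ) (l : List ι)
    (h : ∀ i ∈ l, (ψ i).Ok V m) : (MSOF.bigAnd ψ l).Ok V m := by
  induction l with
  | nil => exact ⟨trivial, by simp [bigAnd, freeF, h0], by simp [bigAnd, freeS]⟩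
  | cons i l ih =>
    have h1 := h i (by simp)
    have h2 := ih (fun j hj => h j (by simp [hj]))
    exact ⟨⟨h1.nq, h2.nq⟩, Finset.union_subset h1.ff h2.ff, Finset.union_subset h1.fs h2.fs⟩

theorem MSOF.bigAnd_holds {Δ ι : Type} (ψ : ι → MSOF Δ) (l : List ι) (nw : NestedWord Δ) (g G) :
    (MSOF.bigAnd ψ l).holds nw g G ↔ ∀ i ∈ l, (ψ i).holds nw g G := by
  induction l with
  | nil => simp [bigAnd, holds]
  | cons i l ih => simp [bigAnd, holds, ih]

/-- Blocks of existential set quantifiers. -/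
def WMSO.exSs {K Δ : Type} : ℕ → WMSO K Δ → WMSO K Δ
  | 0, φ => φ
  | k + 1, φ => .exS k (exSs k φ)

theorem WMSO.exSs_sremso {K Δ : Type} (k : ℕ) (φ : WMSO K Δ) (h : SRFO φ) : SREMSO (φ.exSs k) := by
  induction k with
  | zero => exact .base h
  | succ k ih => exact .exS ih

theorem WMSO.exSs_freeF {K Δ : Type} (k : ℕ) (φ : WMSO K Δ) : (φ.exSs k).freeF = φ.freeF := by
  induction k with
  | zero => rfl
  | succ k ih => exact ih

theorem WMSO.exSs_freeS {K Δ : Type} (k : ℕ) (φ : WMSO K Δ) :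
    (φ.exSs k).freeS = φ.freeS \ Finset.range k := by
  induction k with
  | zero => simp [exSs]
  | succ k ih =>
    simp only [exSs, WMSO.freeS, ih]
    ext z
    simp only [Finset.mem_erase, Finset.mem_sdiff, Finset.mem_range]
    constructor
    · rintro ⟨h1, h2, h3⟩; exact ⟨h2, by omega⟩
    · rintro ⟨h1, h2⟩; exact ⟨by omega, h1, by omega⟩

theorem sum_snoc {K T : Type} [CommSemiring K] [Fintype T] (k : ℕ) (F : (Fin k → T) → T → K) :
    ∑ t : T, ∑ f : Fin k → T, F f t =
      ∑ f : Fin (k + 1) → T, F (fun i => f i.castSucc) (f (Fin.last k)) := by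
  rw [← Fintype.sum_prod_type' (fun t f => F f t)]
  refine Fintype.sum_equiv ⟨fun p => Fin.snoc (α := fun _ => T) p.2 p.1,
    fun f => (f (Fin.last k), fun i => f i.castSucc), fun p => ?_, fun f => ?_⟩ _ _ fun p => ?_
  · simp
  · funext i
    refine Fin.lastCases ?_ (fun j => ?_) i <;> simp
  · simp

theorem WMSO.exSs_sem {K Δ : Type} [CommSemiring K] (k : ℕ) (φ : WMSO K Δ) (nw : NestedWord Δ)
    (g : ℕ → ℕ) : ∀ G : ℕ → Finset ℕ, (φ.exSs k).sem nw g G =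
      ∑ f : Fin k → {T // T ∈ (Finset.Icc 1 nw.len).powerset},
        φ.sem nw g (fun X => if h : X < k then (f ⟨X, h⟩).1 else G X) := by
  induction k with
  | zero => intro G; simp [exSs]
  | succ k ih =>
    intro G
    simp only [exSs, WMSO.sem, ih]
    refine (Finset.sum_coe_sort (Finset.Icc 1 nw.len).powerset (fun T =>
      ∑ f : Fin k → {T // T ∈ (Finset.Icc 1 nw.len).powerset},
        φ.sem nw g (fun X => if h : X < k then (f ⟨X, h⟩).1 else Function.update G k T X))).symm.trans ?_
    refine (@sum_snoc K {T // T ∈ (Finset.Icc 1 nw.len).powerset} _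
      (Finset.Subtype.fintype _) k (fun (f : Fin k → {T // T ∈ (Finset.Icc 1 nw.len).powerset}) t =>
      φ.sem nw g (fun X => if h : X < k then (f ⟨X, h⟩).1 else Function.update G k t.1 X))).trans ?_
    refine Finset.sum_congr rfl fun p _ => ?_
    congr 1
    funext X
    rcases lt_trichotomy X k with h | h | h
    · rw [dif_pos h, dif_pos (by omega)]
      have : (⟨X, by omega⟩ : Fin (k + 1)) = Fin.castSucc ⟨X, h⟩ := rfl
      rw [this]
      try simp
    · subst h
      rw [dif_neg (by omega), dif_pos (by omega)]
      have : (⟨X, by omega⟩ : Fin (X + 1)) = Fin.last X := rfl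
      rw [this]
      try simp
    · rw [dif_neg (by omega), dif_neg (by omega), Function.update_of_ne (by omega)]


namespace MSOF.Ok
variable {Δ : Type} {V : Finset ℕ} {m : ℕ} {φ ψ : MSOF Δ}

theorem and (h : φ.Ok V m) (h' : ψ.Ok V m) : (MSOF.and φ ψ).Ok V m :=
  ⟨⟨h.nq, h'.nq⟩, Finset.union_subset h.ff h'.ff, Finset.union_subset h.fs h'.fs⟩

theorem or (h : φ.Ok V m) (h' : ψ.Ok V m) : (MSOF.or φ ψ).Ok V m :=
  ⟨⟨h.nq, h'.nq⟩, Finset.union_subset h.ff h'.ff, Finset.union_subset h.fs h'.fs⟩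

theorem not (h : φ.Ok V m) : (MSOF.not φ).Ok V m := ⟨h.nq, h.ff, h.fs⟩

theorem exF {x : ℕ} (h : φ.Ok (insert x V) m) : (MSOF.exF x φ).Ok V m :=
  ⟨h.nq, Finset.subset_insert_iff.1 h.ff, h.fs⟩

theorem alF {x : ℕ} (h : φ.Ok (insert x V) m) : (MSOF.alF x φ).Ok V m :=
  ⟨h.nq, Finset.subset_insert_iff.1 h.ff, h.fs⟩

theorem mem {x X : ℕ} (hx : x ∈ V) (hX : X < m) : (MSOF.mem x X : MSOF Δ).Ok V m :=
  ⟨trivial, by simpa [MSOF.freeF] using hx, by simpa [MSOF.freeS] using hX⟩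

theorem lev {x y : ℕ} (hx : x ∈ V) (hy : y ∈ V) : (MSOF.lev x y : MSOF Δ).Ok V m :=
  ⟨trivial, by simp [MSOF.freeF, Finset.insert_subset_iff, hx, hy], by simp [MSOF.freeS]⟩

theorem nuv {x y : ℕ} (hx : x ∈ V) (hy : y ∈ V) : (MSOF.nuv x y : MSOF Δ).Ok V m :=
  ⟨trivial, by simp [MSOF.freeF, Finset.insert_subset_iff, hx, hy], by simp [MSOF.freeS]⟩

theorem lab {x : ℕ} {a : Δ} (hx : x ∈ V) : (MSOF.lab a x : MSOF Δ).Ok V m :=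
  ⟨trivial, by simpa [MSOF.freeF] using hx, by simp [MSOF.freeS]⟩

end MSOF.Ok

section RunFormula

variable {Δ Q : Type} [Fintype Q] {m : ℕ}

/-- Every position carries exactly one label. -/
noncomputable def exactlyOne (τ : Q × Q → ℕ) : MSOF Δ :=
  .and (.not (MSOF.bigAnd (fun t : Q × Q => .not (.mem 0 (τ t))) Finset.univ.toList))
    (MSOF.bigAnd (fun p : {p : (Q × Q) × (Q × Q) // p.1 ≠ p.2} =>
      .not (.and (.mem 0 (τ p.1.1)) (.mem 0 (τ p.1.2))))
      (@Finset.univ _ (Fintype.ofFinite _)).toList)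

/-- Labels of consecutive positions match. -/
noncomputable def consec (τ : Q × Q → ℕ) : MSOF Δ :=
  .or (.not (.and (.not (.lev 1 0)) (.alF 2 (.or (.lev 2 0) (.lev 1 2)))))
    (MSOF.bigAnd (fun p : {p : (Q × Q) × (Q × Q) // p.1.2 ≠ p.2.1} =>
      .not (.and (.mem 0 (τ p.1.1)) (.mem 1 (τ p.1.2))))
      (@Finset.univ _ (Fintype.ofFinite _)).toList)

/-- The set variables encode a run. -/
noncomputable def runForm (τ : Q × Q → ℕ) : MSOF Δ :=
  .and (.alF 0 (exactlyOne τ)) (.alF 0 (.alF 1 (consec τ)))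

theorem runForm_ok (τ : Q × Q → ℕ) (hτ : ∀ t, τ t < m) : (runForm τ : MSOF Δ).Ok ∅ m := by
  refine .and (.alF (.and (.not (MSOF.bigAnd_ok (by simp) _ _ fun t _ => .not (.mem (by simp) (hτ _))))
    (MSOF.bigAnd_ok (by simp) _ _ fun t _ => .not (.and (.mem (by simp) (hτ _)) (.mem (by simp) (hτ _))))))
    (.alF (.alF (.or (.not (.and (.not (.lev (by simp) (by simp)))
      (.alF (.or (.lev (by simp) (by simp)) (.lev (by simp) (by simp))))))
      (MSOF.bigAnd_ok (by simp) _ _ fun t _ => .not (.and (.mem (by simp) (hτ _)) (.mem (by simp) (hτ _)))))))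

theorem runForm_holds (τ : Q × Q → ℕ) (nw : NestedWord Δ) (g : ℕ → ℕ) (G : ℕ → Finset ℕ) :
    (runForm τ).holds nw g G ↔
      (∀ i ∈ Finset.Icc 1 nw.len, (∃ t, i ∈ G (τ t)) ∧
        ∀ t t', i ∈ G (τ t) → i ∈ G (τ t') → t = t') ∧
      (∀ i ∈ Finset.Icc 1 nw.len, i + 1 ∈ Finset.Icc 1 nw.len →
        ∀ t t', i ∈ G (τ t) → i + 1 ∈ G (τ t') → t.2 = t'.1) := by
  simp only [runForm, exactlyOne, consec, MSOF.holds, MSOF.bigAnd_holds]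
  refine and_congr (forall_congr' fun i => imp_congr_right fun hi => and_congr ?_ ?_) ?_
  · simp
  · constructor
    · intro h t t' h1 h2
      by_contra hne
      have := h ⟨(t, t'), hne⟩ (by simp)
      simp at this
      exact this h1 h2
    · rintro h ⟨⟨t, t'⟩, hne⟩ -
      simp only [Function.update_self]
      rintro ⟨h1, h2⟩
      exact hne (h t t' h1 h2)
  · constructor
    · intro h i hi hi' t t' h1 h2
      by_contra hne
      rcases h i hi (i + 1) hi' with h3 | h3
      · apply h3
        simp
        intros; omega
      · have := h3 ⟨(t, t'), hne⟩ (by simp)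
        simp at this
        exact this h1 h2
    · intro h i hi j hj
      rw [or_iff_not_imp_left]
      intro h1
      simp at h1
      obtain ⟨h1, h2⟩ := h1
      have hj' : j = i + 1 := by
        simp only [Finset.mem_Icc] at hi hj
        have := h2 (i + 1) (by omega) (by omega)
        omega
      subst hj'
      rintro ⟨⟨t, t'⟩, hne⟩ -
      simp
      intro h3 h4
      exact hne (h i hi hj t t' h3 h4)

end RunFormula

theorem sum_ind_unique {K ι : Type} [CommSemiring K] [Fintype ι] (P : ι → Prop) (k : ι → K) (i₀ : ι)
    (h : ∀ i, P i ↔ i = i₀) : ∑ i, ind K (P i) * k i = k i₀ := by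
  classical
  rw [Finset.sum_eq_single i₀]
  · rw [ind_congr (h i₀)]; simp [ind_true]
  · intro i _ hi
    rw [ind_congr (h i)]; simp [hi, ind_false]
  · simp

theorem sum_ind_none {K ι : Type} [CommSemiring K] [Fintype ι] (P : ι → Prop) (k : ι → K)
    (h : ∀ i, ¬ P i) : ∑ i, ind K (P i) * k i = 0 :=
  Finset.sum_eq_zero fun i _ => by simp [h i, ind_false]

section Weights

variable {K Δ : Type} [CommSemiring K] [Fintype Δ] (A : WNWA K Δ) {m : ℕ}

/-- `G` encodes the run `ρ` through `τ`. -/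
def Encodes {Δ Q : Type} (nw : NestedWord Δ) (τ : Q × Q → ℕ) (G : ℕ → Finset ℕ) (ρ : ℕ → Q) : Prop :=
  ∀ j ∈ Finset.Icc 1 nw.len, ∀ t, j ∈ G (τ t) ↔ t = (ρ (j - 1), ρ j)

theorem exists_posForm (τ : A.Q × A.Q → ℕ) (hτ : ∀ t, τ t < m) : ∃ φ : WMSO K Δ, φ.Ok {0} m ∧
    ∀ nw g G ρ, Encodes nw τ G ρ → ∀ j ∈ Finset.Icc 1 nw.len,
      φ.sem nw (Function.update g 0 j) G = A.posWeight nw ρ j := by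
  obtain ⟨φ1, o1, s1⟩ := exists_pick (V := {0}) (m := m)
    (fun p : (A.Q × A.Q) × Δ => (.and (.exF 1 (.nuv 0 1)) (.and (.mem 0 (τ p.1)) (.lab p.2 0)) : MSOF Δ))
    (fun p => .and (.exF (.nuv (by simp) (by simp))) (.and (.mem (by simp) (hτ _)) (.lab (by simp))))
    (fun p => A.δcall p.1.1 p.2 p.1.2)
  obtain ⟨φ2, o2, s2⟩ := exists_pick (V := {0}) (m := m)
    (fun p : (A.Q × A.Q) × Δ => (.and (.not (.or (.exF 1 (.nuv 0 1)) (.exF 1 (.nuv 1 0))))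
      (.and (.mem 0 (τ p.1)) (.lab p.2 0)) : MSOF Δ))
    (fun p => .and (.not (.or (.exF (.nuv (by simp) (by simp))) (.exF (.nuv (by simp) (by simp)))))
      (.and (.mem (by simp) (hτ _)) (.lab (by simp))))
    (fun p => A.δint p.1.1 p.2 p.1.2)
  obtain ⟨φ3, o3, s3⟩ := exists_pick (V := {0}) (m := m)
    (fun p : (A.Q × A.Q) × (A.Q × A.Q) × Δ => (.and (.exF 1 (.and (.nuv 1 0) (.mem 1 (τ p.2.1))))
      (.and (.mem 0 (τ p.1)) (.lab p.2.2 0)) : MSOF Δ))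
    (fun p => .and (.exF (.and (.nuv (by simp) (by simp)) (.mem (by simp) (hτ _))))
      (.and (.mem (by simp) (hτ _)) (.lab (by simp))))
    (fun p => A.δret p.1.1 p.2.1.1 p.2.2 p.1.2)
  refine ⟨.or φ1 (.or φ2 φ3), .or o1 (.or o2 o3), fun nw g G ρ hE j hj => ?_⟩
  have hcall : (∃ i ∈ Finset.Icc 1 nw.len, nw.rel j i) ↔ nw.IsCall j := by
    constructor
    · rintro ⟨i, -, h⟩; exact ⟨i, h⟩
    · rintro ⟨i, h⟩
      have := nw.isNest.1 _ _ h
      exact ⟨i, Finset.mem_Icc.2 ⟨by omega, this.2.2⟩, h⟩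
  have hret : (∃ i ∈ Finset.Icc 1 nw.len, nw.rel i j) ↔ nw.IsReturn j := by
    constructor
    · rintro ⟨i, -, h⟩; exact ⟨i, h⟩
    · rintro ⟨i, h⟩
      have := nw.isNest.1 _ _ h
      have h3 : j ≤ nw.len := this.2.2
      exact ⟨i, Finset.mem_Icc.2 ⟨by omega, by omega⟩, h⟩
  have hcr : nw.IsCall j → ¬ nw.IsReturn j := by
    rintro ⟨i, h⟩ ⟨k, h'⟩
    have a1 := nw.isNest.1 _ _ h
    have a2 := nw.isNest.1 _ _ h'
    rcases nw.isNest.2.2.2 _ _ _ _ h' h a2.2.1 with h3 | h3 <;> omega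
  simp only [WMSO.sem, s1, s2, s3, MSOF.holds, Function.update_self, ne_eq, zero_ne_one, one_ne_zero,
    not_false_eq_true, Function.update_of_ne, hcall, hret]
  unfold WNWA.posWeight
  by_cases hc : nw.IsCall j
  · have hr := hcr hc
    rw [if_pos hc]
    rw [sum_ind_unique _ _ ((ρ (j - 1), ρ j), nw.letter j), sum_ind_none, sum_ind_none]
    · simp
    · rintro ⟨t, t', a⟩ ⟨⟨i, _, h, _⟩, _⟩; exact hr ⟨i, h⟩
    · rintro ⟨t, a⟩ ⟨h, _⟩; exact h (Or.inl hc)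
    · rintro ⟨t, a⟩
      simp [hc, hE j hj, eq_comm]
  · rw [if_neg hc]
    by_cases hr : nw.IsReturn j
    · rw [dif_pos hr]
      have hch := hr.choose_spec
      set i₀ := hr.choose with hi0
      have h1 := nw.isNest.1 _ _ hch
      have h2 : j ≤ nw.len := h1.2.2
      have hi : i₀ ∈ Finset.Icc 1 nw.len := Finset.mem_Icc.2 ⟨h1.1, by omega⟩
      rw [sum_ind_none, sum_ind_none,
        sum_ind_unique _ _ ((ρ (j - 1), ρ j), (ρ (i₀ - 1), ρ i₀), nw.letter j)]
      · simp
      · rintro ⟨t, t', a⟩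
        simp only [hE j hj, Prod.mk.injEq]
        constructor
        · rintro ⟨⟨i, hi', h3, h4⟩, h5, h6⟩
          have : i = i₀ := nw.isNest.2.2.1 _ _ _ h3 hch
          subst this
          exact ⟨h5, (hE _ hi' _).1 h4, h6.symm⟩
        · rintro ⟨h5, h4, h6⟩
          exact ⟨⟨i₀, hi, hch, (hE _ hi _).2 h4⟩, h5, h6.symm⟩
      · rintro ⟨t, a⟩ ⟨h, _⟩; exact h (Or.inr hr)
      · rintro ⟨t, a⟩ ⟨h, _⟩; exact hc h
    · rw [dif_neg hr]
      rw [sum_ind_none, sum_ind_unique _ _ ((ρ (j - 1), ρ j), nw.letter j), sum_ind_none]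
      · simp
      · rintro ⟨t, t', a⟩ ⟨⟨i, _, h, _⟩, _⟩; exact hr ⟨i, h⟩
      · rintro ⟨t, a⟩
        simp [hc, hr, hE j hj, eq_comm]
      · rintro ⟨t, a⟩ ⟨h, _⟩; exact hc h

theorem exists_endForm (τ : A.Q × A.Q → ℕ) (hτ : ∀ t, τ t < m) (E : MSOF Δ) (hE : E.Ok {0} m)
    (k : A.Q × A.Q → K) : ∃ φ : WMSO K Δ, φ.Ok {0} m ∧
    ∀ nw g G ρ, Encodes nw τ G ρ → ∀ j ∈ Finset.Icc 1 nw.len,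
      (E.holds nw (Function.update g 0 j) G →
        φ.sem nw (Function.update g 0 j) G = k (ρ (j - 1), ρ j)) ∧
      (¬ E.holds nw (Function.update g 0 j) G → φ.sem nw (Function.update g 0 j) G = 1) := by
  obtain ⟨φ1, o1, s1⟩ := exists_pick (V := {0}) (m := m)
    (fun t : A.Q × A.Q => (.and E (.mem 0 (τ t)) : MSOF Δ))
    (fun t => .and hE (.mem (by simp) (hτ _))) k
  refine ⟨.or φ1 ((MSOF.not E).plus K hE.not.nq), .or o1 (.plus hE.not), fun nw g G ρ hEn j hj => ?_⟩
  simp only [WMSO.sem, s1, MSOF.holds, Function.update_self, hEn j hj,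
    ((MSOF.not E).plus_spec K hE.not.nq).1.sem_eq]
  constructor
  · intro h
    rw [sum_ind_unique _ _ (ρ (j - 1), ρ j)]
    · simp [h, ind_false]
    · intro t; simp [h]
  · intro h
    rw [sum_ind_none]
    · simp [h, ind_true]
    · intro t; simp [h]

end Weights


theorem clampFun_of_le {Q : Type} {n : ℕ} (r : Fin (n + 1) → Q) {k : ℕ} (hk : k ≤ n) :
    clampFun r k = r ⟨k, Nat.lt_succ_of_le hk⟩ := by
  simp [clampFun, hk]

open Classical in
theorem definable_of_regular {K Δ : Type} [CommSemiring K] [Fintype Δ] {S : NestedWord Δ → K}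
    (h : NWRegular S) : NWDefinable SREMSO S := by
  obtain ⟨A, hA⟩ := h
  let m := Fintype.card (A.Q × A.Q)
  let e : A.Q × A.Q ≃ Fin m := Fintype.equivFin _
  let τ : A.Q × A.Q → ℕ := fun t => (e t : ℕ)
  have hτ : ∀ t, τ t < m := fun t => (e t).2
  let isFirst : MSOF Δ := .alF 1 (.lev 0 1)
  let isLast : MSOF Δ := .alF 1 (.lev 1 0)
  have okF : isFirst.Ok {0} m := .alF (.lev (by simp) (by simp))
  have okL : isLast.Ok {0} m := .alF (.lev (by simp) (by simp))
  obtain ⟨W, oW, sW⟩ := exists_posForm A τ hτ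
  obtain ⟨I, oI, sI⟩ := exists_endForm A τ hτ isFirst okF (fun t => A.ι t.1)
  obtain ⟨F, oF, sF⟩ := exists_endForm A τ hτ isLast okL (fun t => A.κ t.2)
  have okR : (runForm τ : MSOF Δ).Ok ∅ m := runForm_ok τ hτ
  have oR : ((runForm τ : MSOF Δ).plus K okR.nq).Ok ∅ m := WMSO.Ok.plus okR
  have oB : (WMSO.and W (.and I F)).Ok {0} m := .and oW (.and oI oF)
  let body : WMSO K Δ := .and ((runForm τ : MSOF Δ).plus K okR.nq) (.alF 0 (.and W (.and I F)))
  have hsr : SRFO body := ⟨⟨oR.sr, oB.au, oB.sr⟩, ⟨oR.nq, oB.nq⟩⟩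
  refine ⟨body.exSs m, WMSO.exSs_sremso m body hsr, ⟨?_, ?_⟩, fun nw g G => ?_⟩
  · rw [WMSO.exSs_freeF, ← Finset.subset_empty]
    exact Finset.union_subset oR.ff (Finset.subset_insert_iff.1 oB.ff)
  · rw [WMSO.exSs_freeS, Finset.sdiff_eq_empty_iff_subset]
    exact Finset.union_subset oR.fs oB.fs
  rw [WMSO.exSs_sem, ← hA nw]
  have hn : 1 ≤ nw.len := List.length_pos_iff.2 nw.ne
  generalize hN : nw.len = n at hn
  -- semantics of the body at an encoding
  have hbody : ∀ (G : ℕ → Finset ℕ) (ρ : ℕ → A.Q), Encodes nw τ G ρ →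
      body.sem nw g G = A.ι (ρ 0) * A.runWeight nw ρ * A.κ (ρ n) := by
    intro G ρ hE
    have hR : (runForm τ : MSOF Δ).holds nw g G := by
      rw [runForm_holds]
      refine ⟨fun i hi => ⟨⟨_, (hE i hi _).2 rfl⟩, fun t t' h1 h2 => ?_⟩, fun i hi hi' t t' h1 h2 => ?_⟩
      · rw [(hE i hi _).1 h1, (hE i hi _).1 h2]
      · rw [(hE i hi _).1 h1, (hE _ hi' _).1 h2]
        simp
    have hfirst : ∀ j ∈ Finset.Icc 1 nw.len, isFirst.holds nw (Function.update g 0 j) G ↔ j = 1 := by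
      intro j hj
      simp only [isFirst, MSOF.holds]
      simp at hj ⊢
      constructor
      · intro h; have := h 1 le_rfl (by omega); omega
      · intros; omega
    have hlast : ∀ j ∈ Finset.Icc 1 nw.len, isLast.holds nw (Function.update g 0 j) G ↔ j = n := by
      intro j hj
      simp only [isLast, MSOF.holds]
      simp at hj ⊢
      constructor
      · intro h; have := h n (by omega) (by omega); omega
      · intros; omega
    simp only [body, WMSO.sem, ((runForm τ : MSOF Δ).plus_spec K okR.nq).1.sem_eq]
    rw [ind_true hR, one_mul, Finset.prod_mul_distrib,
      Finset.prod_mul_distrib]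
    have e1 : ∏ j ∈ Finset.Icc 1 nw.len, W.sem nw (Function.update g 0 j) G = A.runWeight nw ρ :=
      Finset.prod_congr rfl fun j hj => sW nw g G ρ hE j hj
    have e2 : ∏ j ∈ Finset.Icc 1 nw.len, I.sem nw (Function.update g 0 j) G = A.ι (ρ 0) := by
      have h1 : 1 ∈ Finset.Icc 1 nw.len := by simp; omega
      rw [Finset.prod_eq_single_of_mem 1 h1]
      · rw [(sI nw g G ρ hE 1 h1).1 ((hfirst 1 h1).2 rfl)]
      · intro j hj hne
        exact (sI nw g G ρ hE j hj).2 (fun h => hne ((hfirst j hj).1 h))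
    have e3 : ∏ j ∈ Finset.Icc 1 nw.len, F.sem nw (Function.update g 0 j) G = A.κ (ρ n) := by
      have h1 : n ∈ Finset.Icc 1 nw.len := by simp; omega
      rw [Finset.prod_eq_single_of_mem n h1]
      · rw [(sF nw g G ρ hE n h1).1 ((hlast n h1).2 rfl)]
      · intro j hj hne
        exact (sF nw g G ρ hE j hj).2 (fun h => hne ((hlast j hj).1 h))
    rw [e1, e2, e3]
    ring
  have hno : ∀ G : ℕ → Finset ℕ, ¬ (runForm τ : MSOF Δ).holds nw g G → body.sem nw g G = 0 := by
    intro G h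
    simp only [body, WMSO.sem, ((runForm τ : MSOF Δ).plus_spec K okR.nq).1.sem_eq]
    rw [ind_false h, zero_mul]
  subst hN
  -- the encoding of runs
  let enc : (Fin (nw.len + 1) → A.Q) → Fin m → {T // T ∈ (Finset.Icc 1 nw.len).powerset} :=
    fun r i => ⟨(Finset.Icc 1 nw.len).filter
      (fun j => e.symm i = (clampFun r (j - 1), clampFun r j)), by simp⟩
  have hτe : ∀ (f : Fin m → {T // T ∈ (Finset.Icc 1 nw.len).powerset}) (t : A.Q × A.Q),
      (if h : τ t < m then (f ⟨τ t, h⟩).1 else G (τ t)) = (f (e t)).1 := by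
    intro f t
    rw [dif_pos (hτ t)]
  have hEnc : ∀ r, Encodes nw τ (fun X => if h : X < m then (enc r ⟨X, h⟩).1 else G X) (clampFun r) := by
    intro r j hj t
    have h1 := hτe (enc r) t
    have h2 : j ∈ (enc r (e t)).1 ↔ t = (clampFun r (j - 1), clampFun r j) := by
      simp only [enc, Finset.mem_filter, hj, true_and, Equiv.symm_apply_apply]
    rw [← h2]
    exact iff_of_eq (congrArg (fun s : Finset ℕ => j ∈ s) h1)
  unfold WNWA.behavior
  symm
  refine Fintype.sum_of_injective enc ?_ _ _ ?_ ?_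
  · intro r r' h
    have key : ∀ j ∈ Finset.Icc 1 nw.len,
        (clampFun r (j - 1), clampFun r j) = (clampFun r' (j - 1), clampFun r' j) := by
      intro j hj
      have h1 := (hEnc r j hj (clampFun r (j - 1), clampFun r j)).2 rfl
      rw [h] at h1
      exact (hEnc r' j hj _).1 h1
    funext k
    have hk : (k : ℕ) ≤ nw.len := Nat.le_of_lt_succ k.2
    have : clampFun r k = clampFun r' k := by
      rcases Nat.eq_zero_or_pos (k : ℕ) with h0 | h0
      · rw [h0]
        exact congrArg Prod.fst (key 1 (by simp; omega))
      · exact congrArg Prod.snd (key k (by simp; omega))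
    rwa [clampFun_of_le r hk, clampFun_of_le r' hk] at this
  · intro f hf
    apply hno
    intro hR
    apply hf
    rw [runForm_holds] at hR
    simp only [hτe] at hR
    obtain ⟨h1, h2⟩ := hR
    have : Nonempty (A.Q × A.Q) := ⟨(h1 1 (by simp; omega)).1.choose⟩
    choose! L hL using fun i hi => (h1 i hi).1
    let r : Fin (nw.len + 1) → A.Q := fun k => if (k : ℕ) = 0 then (L 1).1 else (L k).2
    have hrL : ∀ j ∈ Finset.Icc 1 nw.len, (clampFun r (j - 1), clampFun r j) = L j := by
      intro j hj
      have hj' := Finset.mem_Icc.1 hj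
      rw [clampFun_of_le r (by omega), clampFun_of_le r hj'.2]
      ext
      · simp only [r]
        by_cases h0 : j = 1
        · subst h0; simp
        · rw [if_neg (by omega)]
          have hj1 : j - 1 ∈ Finset.Icc 1 nw.len := Finset.mem_Icc.2 (by omega)
          have hj2 : j - 1 + 1 = j := by omega
          have := h2 (j - 1) hj1 (by rw [hj2]; exact hj) (L (j - 1)) (L j) (hL _ hj1)
            (by rw [hj2]; exact hL _ hj)
          exact this
      · simp only [r]
        rw [if_neg (by omega)]
    refine ⟨r, ?_⟩
    funext i
    apply Subtype.ext
    ext j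
    simp only [enc, Finset.mem_filter]
    constructor
    · rintro ⟨hj, h3⟩
      rw [hrL j hj] at h3
      have := hL j hj
      rw [← h3] at this
      simpa using this
    · intro hj
      have hjm : j ∈ Finset.Icc 1 nw.len := Finset.mem_powerset.1 (f i).2 hj
      refine ⟨hjm, ?_⟩
      rw [hrL j hjm]
      exact (h1 j hjm).2 _ _ (by simpa using hj) (hL j hjm)
  · intro r
    rw [hbody _ _ (hEnc r)]
    rw [clampFun_of_le r (Nat.zero_le _), clampFun_of_le r le_rfl]
    rfl

theorem SREMSO.srmso {K Δ : Type} {φ : WMSO K Δ} (h : SREMSO φ) : SRMSO φ := by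
  induction h with
  | base h => exact h.1
  | exS _ ih => exact ih

theorem srmso_of_sremso {K Δ : Type} [CommSemiring K] {S : NestedWord Δ → K}
    (h : NWDefinable SREMSO S) : NWDefinable SRMSO S := by
  obtain ⟨φ, h1, h2⟩ := h
  exact ⟨φ, h1.srmso, h2⟩

/-- **Theorem (Mathissen).** A nested word series is regular iff it is
`sRMSO(K)`-definable iff it is `sREMSO(K)`-definable. -/
theorem regular_iff_sRMSO_definable_iff_sREMSO_definable
    (K Δ : Type) [CommSemiring K] [Fintype Δ] (h01 : (0 : K) ≠ 1)
    (S : NestedWord Δ → K) :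
    (NWRegular S ↔ NWDefinable SRMSO S) ∧ (NWRegular S ↔ NWDefinable SREMSO S) := by
  exact ⟨⟨fun h => srmso_of_sremso (definable_of_regular h), regular_of_definable⟩,
    ⟨definable_of_regular, fun h => regular_of_definable (srmso_of_sremso h)⟩⟩
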